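/- If finite posets A and B satisfy s_k(O(A)) ≤ s_k(C(A)) and s_k(O(B)) ≤ s_k(C(B)) for all k, then s_k(O(A < B)) ≤ s_k(C(A < B)) for all k, where A < B is the ordinal sum. -/

import Mathlib

open Set

variable {E : Type*} [AddCommGroup E] [Module ℝ E]

/-- A polytope: the convex hull of a finite set of points. -/
def IsPolytope (P : Set E) : Prop := ∃ S : Finset E, P = convexHull ℝ (S : Set E)

open Classical in
/-- Dimension of a polytope: `-1` for the empty set, else the dimension of its affine span. -/
noncomputable def polyDim (P : Set E) : ℤ :=
  if P = ∅ then -1 else (Module.finrank ℝ (vectorSpan ℝ P) : ℤ)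

/-- Number of vertices (extreme points). -/
noncomputable def vertexCount (P : Set E) : ℕ := (P.extremePoints ℝ).ncard

/-- A simplex: a polytope with `dim + 1` vertices (the empty set counts as a simplex). -/
def IsSimplex (P : Set E) : Prop :=
  IsPolytope P ∧ (vertexCount P : ℤ) = polyDim P + 1

/-- Faces of a polytope are its extreme subsets. -/
def IsFaceOf (F P : Set E) : Prop := IsExtreme ℝ P F

/-- Number of `k`-dimensional simplex faces of `P`. -/
noncomputable def simpCount (P : Set E) (k : ℤ) : ℕ :=
  {F : Set E | IsFaceOf F P ∧ IsSimplex F ∧ polyDim F = k}.ncard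

/-- Number of `k`-dimensional simplex faces of `P` containing the origin. -/
noncomputable def simpCount0 (P : Set E) (k : ℤ) : ℕ :=
  {F : Set E | IsFaceOf F P ∧ IsSimplex F ∧ polyDim F = k ∧ (0 : E) ∈ F}.ncard

/-- Number of `k`-dimensional simplex faces of `P` not containing the origin. -/
noncomputable def simpCount1 (P : Set E) (k : ℤ) : ℕ :=
  {F : Set E | IsFaceOf F P ∧ IsSimplex F ∧ polyDim F = k ∧ (0 : E) ∉ F}.ncard

/-- The order polytope of a poset. -/
def orderPolytope (α : Type*) [PartialOrder α] : Set (α → ℝ) :=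
  {x | (∀ p, 0 ≤ x p ∧ x p ≤ 1) ∧ ∀ p q : α, p ≤ q → x p ≤ x q}

/-- The chain polytope of a poset. -/
def chainPolytope (α : Type*) [PartialOrder α] : Set (α → ℝ) :=
  {x | (∀ p, 0 ≤ x p) ∧ ∀ s : Finset α, IsChain (· ≤ ·) (s : Set α) → ∑ p ∈ s, x p ≤ 1}

open Classical in
/-- Characteristic vector of a subset. -/
noncomputable def chi {α : Type*} (S : Set α) : α → ℝ := fun p => if p ∈ S then 1 else 0


/-! ### Simplices and their vertex sets -/

/-- Vertex sets of simplex faces. -/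
def Simp (P : Set E) : Set (Finset E) :=
  {T | AffineIndependent ℝ ((↑) : T → E) ∧ IsExtreme ℝ P (convexHull ℝ (T : Set E))}

theorem affInd_coeff {T : Finset E} (hT : AffineIndependent ℝ ((↑) : T → E))
    {u v : E → ℝ} (h1 : ∑ i ∈ T, u i = ∑ i ∈ T, v i)
    (h2 : ∑ i ∈ T, u i • i = ∑ i ∈ T, v i • i) : ∀ i ∈ T, u i = v i := by
  rw [affineIndependent_iff] at hT
  intro i hi
  have := hT Finset.univ (fun j => u j - v j) (by
    rw [Finset.sum_coe_sort T (fun j => u j - v j), Finset.sum_sub_distrib, h1, sub_self]) (by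
    rw [Finset.sum_coe_sort T (fun j => (u j - v j) • j)]
    simp_rw [sub_smul]
    rw [Finset.sum_sub_distrib, h2, sub_self]) ⟨i, hi⟩ (Finset.mem_univ _)
  simpa [sub_eq_zero] using this

theorem affInd_face {T T' : Finset E} (hT : AffineIndependent ℝ ((↑) : T → E)) (h : T' ⊆ T) :
    IsExtreme ℝ (convexHull ℝ (T : Set E)) (convexHull ℝ (T' : Set E)) := by
  classical
  refine ⟨convexHull_mono (by exact_mod_cast h), ?_⟩
  intro x hx y hy z hz hzo
  rw [Finset.mem_convexHull'] at hx hy hz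
  obtain ⟨w, hw0, hw1, rfl⟩ := hx
  obtain ⟨v, hv0, hv1, rfl⟩ := hy
  obtain ⟨u, hu0, hu1, rfl⟩ := hz
  obtain ⟨a, b, ha, hb, hab, he⟩ := hzo
  have key := affInd_coeff hT (u := fun i => a * w i + b * v i)
    (v := fun i => if i ∈ T' then u i else 0) (by
      rw [Finset.sum_add_distrib, ← Finset.mul_sum, ← Finset.mul_sum, hw1, hv1,
        Finset.sum_ite_mem, Finset.inter_eq_right.2 h, hu1]
      linarith) (by
      simp_rw [add_smul, mul_smul, ite_smul, zero_smul]
      rw [Finset.sum_add_distrib, ← Finset.smul_sum, ← Finset.smul_sum, he,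
        Finset.sum_ite_mem, Finset.inter_eq_right.2 h])
  have hz : ∀ i ∈ T, i ∉ T' → w i = 0 := by
    intro i hi hi'
    have := key i hi
    simp only [hi', if_false] at this
    have h1 := mul_nonneg ha.le (hw0 i hi)
    have h2 := mul_nonneg hb.le (hv0 i hi)
    have h3 : a * w i = 0 := by linarith
    exact (mul_eq_zero.1 h3).resolve_left ha.ne'
  rw [Finset.mem_convexHull']
  refine ⟨w, fun i hi => hw0 i (h hi), ?_, ?_⟩
  · rw [← hw1]; exact Finset.sum_subset h hz
  · exact Finset.sum_subset h (fun i hi hi' => by rw [hz i hi hi', zero_smul])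

theorem affInd_extremePoints {T : Finset E} (hT : AffineIndependent ℝ ((↑) : T → E)) :
    (convexHull ℝ (T : Set E)).extremePoints ℝ = T := by
  apply Subset.antisymm extremePoints_convexHull_subset
  intro t ht
  have := affInd_face hT (T' := {t}) (by simpa using ht)
  simpa using this

theorem vectorSpan_convexHull' (S : Set E) :
    vectorSpan ℝ (convexHull ℝ S) = vectorSpan ℝ S := by
  rw [← direction_affineSpan, ← direction_affineSpan, affineSpan_convexHull]

theorem affInd_polyDim {T : Finset E} (hT : AffineIndependent ℝ ((↑) : T → E)) :
    (T.card : ℤ) = polyDim (convexHull ℝ (T : Set E)) + 1 := by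
  unfold polyDim
  rcases T.eq_empty_or_nonempty with rfl | hne
  · simp
  · rw [if_neg (by simpa using hne.ne_empty), vectorSpan_convexHull']
    have : Nonempty T := hne.to_subtype
    have := hT.finrank_vectorSpan_add_one
    have hr : Set.range ((↑) : T → E) = (T : Set E) := by simp
    rw [hr, Fintype.card_coe] at this
    rw [← this]; push_cast; rfl

theorem simpCount_eq {V : Type*} [NormedAddCommGroup V] [NormedSpace ℝ V] [FiniteDimensional ℝ V]
    (P : Set V) (k : ℤ) :
    simpCount P k = {T | T ∈ Simp P ∧ (T.card : ℤ) = k + 1}.ncard := by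
  classical
  unfold simpCount
  symm
  apply Set.ncard_congr (fun (T : Finset V) _ => convexHull ℝ (T : Set V))
  · rintro T ⟨⟨h1, h2⟩, h3⟩
    have h4 := affInd_polyDim h1
    refine ⟨h2, ⟨⟨T, rfl⟩, ?_⟩, by linarith⟩
    rw [vertexCount, affInd_extremePoints h1, Set.ncard_coe_finset, h4]
  · rintro T T' ⟨⟨h1, h2⟩, h3⟩ ⟨⟨h1', h2'⟩, h3'⟩ h
    have := congrArg (extremePoints ℝ) h
    rw [affInd_extremePoints h1, affInd_extremePoints h1'] at this
    exact_mod_cast this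
  · rintro F ⟨h1, ⟨⟨S, hS⟩, h2⟩, h3⟩
    have hfin : (F.extremePoints ℝ).Finite := by
      rw [hS]; exact S.finite_toSet.subset extremePoints_convexHull_subset
    have hF : convexHull ℝ (F.extremePoints ℝ) = F := by
      have := closure_convexHull_extremePoints (s := F)
        (by rw [hS]; exact S.finite_toSet.isCompact_convexHull ℝ) (by rw [hS]; exact convex_convexHull _ _)
      rwa [(hfin.isClosed_convexHull ℝ).closure_eq] at this
    have hcard : (hfin.toFinset.card : ℤ) = polyDim F + 1 := by
      rw [← h2, vertexCount, Set.ncard_eq_toFinset_card _ hfin]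
    refine ⟨hfin.toFinset, ⟨⟨?_, ?_⟩, ?_⟩, ?_⟩
    · rcases hfin.toFinset.eq_empty_or_nonempty with he | hne
      · rw [he]; exact affineIndependent_of_subsingleton _ _
      · have : Nonempty hfin.toFinset := hne.to_subtype
        have hFne : F ≠ ∅ := by
          rintro rfl
          simp at hne
        obtain ⟨m, hm⟩ : ∃ m, hfin.toFinset.card = m + 1 :=
          ⟨hfin.toFinset.card - 1, by have := hne.card_pos; omega⟩
        rw [affineIndependent_iff_finrank_vectorSpan_eq (n := m) _ _ (by simpa using hm)]
        rw [polyDim, if_neg hFne] at hcard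
        have hr : Set.range ((↑) : hfin.toFinset → V) = F.extremePoints ℝ := by simp
        rw [hr, ← vectorSpan_convexHull', hF]
        rw [hm] at hcard; push_cast at hcard; omega
    · simpa [hF, IsFaceOf] using h1
    · rw [hcard, h3]
    · simpa using hF

/-! ### Faces avoiding / containing the origin -/

def MM (P : Set E) (n : ℕ) : Set (Finset E) :=
  {T | LinearIndependent ℝ ((↑) : T → E) ∧ IsExtreme ℝ P (convexHull ℝ (T : Set E)) ∧ T.card = n}

def NN (P : Set E) (n : ℕ) : Set (Finset E) :=
  {T | LinearIndependent ℝ ((↑) : T → E) ∧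
    IsExtreme ℝ P (convexHull ℝ (insert 0 (T : Set E))) ∧ T.card = n}

theorem linInd_iff {T : Finset E} : LinearIndependent ℝ ((↑) : T → E) ↔
    ∀ u : E → ℝ, ∑ i ∈ T, u i • i = 0 → ∀ i ∈ T, u i = 0 := by
  classical
  rw [Fintype.linearIndependent_iff]
  constructor
  · intro h u hu i hi
    exact h (fun j => u j) (by rw [Finset.sum_coe_sort T (fun j => u j • j)]; exact hu) ⟨i, hi⟩
  · intro h g hg i
    have := h (fun e => if he : e ∈ T then g ⟨e, he⟩ else 0) (by
      rw [← hg, ← Finset.sum_coe_sort]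
      apply Finset.sum_congr rfl
      intro j _
      simp) i i.2
    simpa using this

theorem linInd_coeff {T : Finset E} (hT : LinearIndependent ℝ ((↑) : T → E))
    {u v : E → ℝ}
    (h2 : ∑ i ∈ T, u i • i = ∑ i ∈ T, v i • i) : ∀ i ∈ T, u i = v i := by
  intro i hi
  have := linInd_iff.1 hT (fun i => u i - v i) (by
    simp_rw [sub_smul]; rw [Finset.sum_sub_distrib, h2, sub_self]) i hi
  simpa [sub_eq_zero] using this

theorem linInd_zero {T : Finset E} (hT : LinearIndependent ℝ ((↑) : T → E)) : (0 : E) ∉ T := by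
  intro h
  exact hT.ne_zero ⟨0, h⟩ rfl

theorem affInd_of_linInd {T : Finset E} (hT : LinearIndependent ℝ ((↑) : T → E)) :
    AffineIndependent ℝ ((↑) : T → E) := hT.affineIndependent

open Classical in
theorem affInd_insert {T : Finset E} (h0 : (0 : E) ∉ T) :
    AffineIndependent ℝ ((↑) : (insert 0 T : Finset E) → E) ↔
      LinearIndependent ℝ ((↑) : T → E) := by
  have := linearIndependent_set_iff_affineIndependent_vadd_union_singleton ℝ (V := E)
    (s := (T : Set E)) (fun v hv => by rintro rfl; exact h0 (by simpa using hv)) (0 : E)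
  have hset : ({0} ∪ (fun v : E => v +ᵥ (0 : E)) '' (T : Set E)) =
      ((insert 0 T : Finset E) : Set E) := by
    simp
  rw [hset] at this
  exact this.symm

theorem zero_mem_of_hull {P : Set E} {T : Finset E} (hP : (0 : E) ∈ P.extremePoints ℝ)
    (hT : IsExtreme ℝ P (convexHull ℝ (T : Set E))) (h : (0 : E) ∈ convexHull ℝ (T : Set E)) :
    (0 : E) ∈ T := by
  have : (0 : E) ∈ (convexHull ℝ (T : Set E)).extremePoints ℝ :=
    inter_extremePoints_subset_extremePoints_of_subset hT.subset ⟨h, hP⟩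
  simpa using extremePoints_convexHull_subset this

theorem linInd_of_simp {P : Set E} {T : Finset E} (hP : (0 : E) ∈ P.extremePoints ℝ)
    (hT : T ∈ Simp P) (h0 : (0 : E) ∉ T) : LinearIndependent ℝ ((↑) : T → E) := by
  rw [linInd_iff]
  intro u hu
  by_cases hs : ∑ i ∈ T, u i = 0
  · exact affInd_coeff hT.1 (v := fun _ => 0) (by simpa using hs) (by simpa using hu)
  exfalso
  apply h0
  apply zero_mem_of_hull hP hT.2
  have hne : T.Nonempty := by
    rw [Finset.nonempty_iff_ne_empty]; rintro rfl; simp at hs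
  have hc : (0 : ℝ) < T.card := by exact_mod_cast hne.card_pos
  set σ := ∑ i ∈ T, u i with hσ
  set K : ℝ := 1 + ∑ i ∈ T, |u i / σ| with hK
  have hK1 : 0 < K := by positivity
  set ε : ℝ := 1 / (T.card * K) with hε
  have hε0 : 0 < ε := by positivity
  have hb : ∀ i ∈ T, ε * (u i / σ) ≤ (1 : ℝ) / T.card := by
    intro i hi
    have h1 : |u i / σ| ≤ ∑ i ∈ T, |u i / σ| :=
      Finset.single_le_sum (f := fun i => |u i / σ|) (fun _ _ => abs_nonneg _) hi
    have h2 : u i / σ ≤ K := by have := le_abs_self (u i / σ); linarith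
    calc ε * (u i / σ) ≤ ε * K := by gcongr
      _ = 1 / T.card := by rw [hε]; field_simp
  have hsum : ∑ i ∈ T, (1 : ℝ) / T.card = 1 := by
    rw [Finset.sum_const, nsmul_eq_mul]; field_simp
  have hz : ∑ i ∈ T, ((1 : ℝ) / T.card) • i ∈ convexHull ℝ (T : Set E) := by
    rw [Finset.mem_convexHull']
    exact ⟨fun _ => 1 / T.card, fun i hi => by positivity, hsum, rfl⟩
  have hy : ∑ i ∈ T, ((1 + ε) * ((1 : ℝ) / T.card) - ε * (u i / σ)) • i ∈
      convexHull ℝ (T : Set E) := by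
    rw [Finset.mem_convexHull']
    refine ⟨fun i => ((1 + ε) * ((1 : ℝ) / T.card) - ε * (u i / σ)), fun i hi => ?_, ?_, rfl⟩
    · have := hb i hi
      have h3 : 0 ≤ ε * ((1 : ℝ) / T.card) := by positivity
      nlinarith
    · rw [Finset.sum_sub_distrib, ← Finset.mul_sum, ← Finset.mul_sum, hsum, ← Finset.sum_div,
        ← hσ, div_self hs]; ring
  refine hT.2.left_mem_of_mem_openSegment hP.1 (hT.2.subset hy) hz
    ⟨ε / (1 + ε), 1 / (1 + ε), by positivity, by positivity, by field_simp; ring, ?_⟩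
  have h4 : ∑ i ∈ T, (u i / σ) • i = 0 := by
    simp_rw [div_eq_inv_mul, mul_smul]
    rw [← Finset.smul_sum, hu, smul_zero]
  simp_rw [sub_smul, mul_smul]
  have h5 : ∑ i ∈ T, ε • (u i / σ) • i = 0 := by rw [← Finset.smul_sum, h4, smul_zero]
  have h6 : ∑ i ∈ T, (1 + ε) • ((1 : ℝ) / T.card) • i =
    (1 + ε) • ∑ i ∈ T, ((1 : ℝ) / T.card) • i := by rw [← Finset.smul_sum]
  rw [Finset.sum_sub_distrib, h5, h6, smul_zero,
    zero_add, sub_zero, smul_smul, one_div_mul_cancel (by positivity), one_smul]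

theorem Simp_finite {P : Set E} (hf : (P.extremePoints ℝ).Finite) : (Simp P).Finite := by
  apply (hf.toFinset.powerset.finite_toSet).subset
  intro T hT
  simp only [Finset.coe_powerset, Set.mem_preimage, Set.mem_powerset_iff, Set.Finite.coe_toFinset]
  have := hT.2.extremePoints_subset_extremePoints
  rwa [affInd_extremePoints hT.1] at this

theorem MM_sub {P : Set E} {n : ℕ} : MM P n ⊆ Simp P :=
  fun _ h => ⟨affInd_of_linInd h.1, h.2.1⟩

theorem NN_sub_MM {P : Set E} {n : ℕ} : NN P n ⊆ MM P n := by
  classical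
  intro T h
  refine ⟨h.1, ?_, h.2.2⟩
  have h1 := (affInd_insert (linInd_zero h.1)).2 h.1
  have h2 := affInd_face h1 (Finset.subset_insert 0 T)
  rw [Finset.coe_insert] at h2
  exact h.2.1.trans h2

theorem Simp_count_zero {P : Set E} :
    {T | T ∈ Simp P ∧ T.card = 0}.ncard = (MM P 0).ncard := by
  congr 1
  ext T
  constructor
  · rintro ⟨h1, h2⟩
    refine ⟨?_, h1.2, h2⟩
    rw [Finset.card_eq_zero] at h2
    subst h2
    exact linearIndependent_empty_type
  · intro h
    exact ⟨MM_sub h, h.2.2⟩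

theorem Simp_count_succ {P : Set E} (hP : (0 : E) ∈ P.extremePoints ℝ)
    (hf : (P.extremePoints ℝ).Finite) (n : ℕ) :
    {T | T ∈ Simp P ∧ T.card = n + 1}.ncard = (MM P (n + 1)).ncard + (NN P n).ncard := by
  classical
  have hinj : Set.InjOn (fun T : Finset E => insert 0 T) (NN P n) := by
    intro T hT T' hT' h
    have := congrArg (fun S : Finset E => S.erase 0) h
    simpa [Finset.erase_insert (linInd_zero hT.1), Finset.erase_insert (linInd_zero hT'.1)] using this
  rw [← Set.InjOn.ncard_image hinj]
  have e : {T | T ∈ Simp P ∧ T.card = n + 1} =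
      MM P (n + 1) ∪ (fun T : Finset E => insert 0 T) '' NN P n := by
    ext T
    constructor
    · rintro ⟨h1, h2⟩
      by_cases h0 : (0 : E) ∈ T
      · right
        have h4 : (0 : E) ∉ T.erase 0 := by simp
        have h5 := Finset.insert_erase h0
        refine ⟨T.erase 0, ⟨?_, ?_, ?_⟩, h5⟩
        · rw [← affInd_insert h4, h5]; exact h1.1
        · rw [← Finset.coe_insert, h5]; exact h1.2
        · rw [Finset.card_erase_of_mem h0, h2]; rfl
      · left
        exact ⟨linInd_of_simp hP h1 h0, h1.2, h2⟩
    · rintro (h | ⟨T, h, rfl⟩)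
      · exact ⟨MM_sub h, h.2.2⟩
      · refine ⟨⟨?_, ?_⟩, ?_⟩
        · exact (affInd_insert (linInd_zero h.1)).2 h.1
        · rw [Finset.coe_insert]; exact h.2.1
        · rw [Finset.card_insert_of_notMem (linInd_zero h.1), h.2.2]
  have hfin : {T | T ∈ Simp P ∧ T.card = n + 1}.Finite := (Simp_finite hf).subset fun _ h => h.1
  rw [e] at hfin ⊢
  apply Set.ncard_union_eq _ (hfin.subset subset_union_left) (hfin.subset subset_union_right)
  rw [Set.disjoint_left]
  rintro T h ⟨T', h', rfl⟩
  exact linInd_zero h.1 (by simp)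

/-! ### Joins at the origin -/

section JoinSection

set_option linter.unusedSectionVars false

variable {F : Type*} [AddCommGroup F] [Module ℝ F]

def Join (P : Set E) (Q : Set F) : Set (E × F) :=
  {z | ∃ s t : ℝ, 0 ≤ s ∧ 0 ≤ t ∧ s + t = 1 ∧ (∃ p ∈ P, s • p = z.1) ∧ (∃ q ∈ Q, t • q = z.2)}

open Classical in
noncomputable def JJ (T : Finset E) (U : Finset F) : Finset (E × F) :=
  T.image (fun p => (p, (0 : F))) ∪ U.image (fun q => ((0 : E), q))

theorem mem_JJ {T : Finset E} {U : Finset F} {z : E × F} :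
    z ∈ JJ T U ↔ (z.1 ∈ T ∧ z.2 = 0) ∨ (z.1 = 0 ∧ z.2 ∈ U) := by
  classical
  obtain ⟨x, y⟩ := z
  simp only [JJ, Finset.mem_union, Finset.mem_image, Prod.mk.injEq]
  constructor
  · rintro (⟨p, hp, rfl, rfl⟩ | ⟨p, hp, rfl, rfl⟩)
    · exact Or.inl ⟨hp, rfl⟩
    · exact Or.inr ⟨rfl, hp⟩
  · rintro (⟨h1, h2⟩ | ⟨h1, h2⟩)
    · exact Or.inl ⟨x, h1, rfl, h2.symm⟩
    · exact Or.inr ⟨y, h2, h1.symm, rfl⟩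

theorem sum_JJ {G : Type*} [AddCommMonoid G] {T : Finset E} {U : Finset F} (hT : (0 : E) ∉ T)
    (f : E × F → G) :
    ∑ z ∈ JJ T U, f z = ∑ p ∈ T, f (p, 0) + ∑ q ∈ U, f (0, q) := by
  classical
  unfold JJ
  rw [Finset.sum_union, Finset.sum_image, Finset.sum_image]
  · intro a _ b _ h; simpa using h
  · intro a _ b _ h; simpa using h
  · rw [Finset.disjoint_left]
    intro z h1 h2
    simp only [Finset.mem_image] at h1 h2
    obtain ⟨p, hp, rfl⟩ := h1
    obtain ⟨q, hq, h⟩ := h2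
    simp only [Prod.mk.injEq] at h
    exact hT (h.1 ▸ hp)

theorem card_JJ {T : Finset E} {U : Finset F} (hT : (0 : E) ∉ T) :
    (JJ T U).card = T.card + U.card := by
  simp only [Finset.card_eq_sum_ones]
  exact sum_JJ hT _

theorem JJ_inj {T T' : Finset E} {U U' : Finset F} (hT : (0 : E) ∉ T) (hT' : (0 : E) ∉ T')
    (hU : (0 : F) ∉ U) (hU' : (0 : F) ∉ U') (h : JJ T U = JJ T' U') : T = T' ∧ U = U' := by
  constructor
  · ext p
    have h1 : (p, (0 : F)) ∈ JJ T U ↔ (p, (0 : F)) ∈ JJ T' U' := by rw [h]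
    simpa [mem_JJ, hU, hU'] using h1
  · ext p
    have h1 : ((0 : E), p) ∈ JJ T U ↔ ((0 : E), p) ∈ JJ T' U' := by rw [h]
    simpa [mem_JJ, hT, hT'] using h1

/-- glue two coefficient functions -/
noncomputable def glue (c : E → ℝ) (d : F → ℝ) : E × F → ℝ := by
  classical exact fun z => if z.2 = 0 then c z.1 else d z.2

theorem glue_l (c : E → ℝ) (d : F → ℝ) (p : E) : glue c d (p, 0) = c p := by simp [glue]
theorem glue_r (c : E → ℝ) (d : F → ℝ) {q : F} (hq : q ≠ 0) (p : E) : glue c d (p, q) = d q := by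
  simp [glue, hq]

theorem sum_smul_JJ {T : Finset E} {U : Finset F} (hT : (0 : E) ∉ T) (w : E × F → ℝ) :
    ∑ z ∈ JJ T U, w z • z = (∑ p ∈ T, w (p, 0) • p, ∑ q ∈ U, w (0, q) • q) := by
  rw [sum_JJ hT]
  ext
  · simp [Prod.fst_sum]
  · simp [Prod.snd_sum]

theorem linInd_JJ {T : Finset E} {U : Finset F} (hT : (0 : E) ∉ T) (hU : (0 : F) ∉ U) :
    LinearIndependent ℝ ((↑) : JJ T U → E × F) ↔
      LinearIndependent ℝ ((↑) : T → E) ∧ LinearIndependent ℝ ((↑) : U → F) := by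
  simp only [linInd_iff]
  constructor
  · intro h
    constructor
    · intro u hu i hi
      have := h (glue u (fun _ => 0)) (by
        rw [sum_smul_JJ hT]
        ext
        · simpa [glue_l] using hu
        · apply Finset.sum_eq_zero
          intro q hq
          rw [glue_r _ _ (by rintro rfl; exact hU hq), zero_smul]) (i, 0) (by simp [mem_JJ, hi])
      simpa [glue_l] using this
    · intro u hu i hi
      have hi0 : i ≠ 0 := by rintro rfl; exact hU hi
      have := h (glue (fun _ => 0) u) (by
        rw [sum_smul_JJ hT]
        ext
        · simp [glue_l]
        · refine Eq.trans ?_ hu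
          apply Finset.sum_congr rfl
          intro q hq
          rw [glue_r _ _ (by rintro rfl; exact hU hq)]) (0, i) (by simp [mem_JJ, hi])
      rwa [glue_r _ _ hi0] at this
  · rintro ⟨h1, h2⟩ u hu i hi
    rw [sum_smul_JJ hT] at hu
    simp only [Prod.mk_eq_zero] at hu
    rcases mem_JJ.1 hi with ⟨h3, h4⟩ | ⟨h3, h4⟩
    · have := h1 _ hu.1 i.1 h3
      rwa [← h4] at this
    · have := h2 _ hu.2 i.2 h4
      rwa [← h3] at this

theorem hull_JJ {T : Finset E} {U : Finset F} (hT : (0 : E) ∉ T) (hU : (0 : F) ∉ U) {z : E × F} :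
    z ∈ convexHull ℝ (JJ T U : Set (E × F)) ↔ ∃ (c : E → ℝ) (d : F → ℝ), (∀ i ∈ T, 0 ≤ c i) ∧
      (∀ i ∈ U, 0 ≤ d i) ∧ ∑ i ∈ T, c i + ∑ i ∈ U, d i = 1 ∧ ∑ i ∈ T, c i • i = z.1 ∧
      ∑ i ∈ U, d i • i = z.2 := by
  rw [Finset.mem_convexHull']
  constructor
  · rintro ⟨w, h0, h1, rfl⟩
    rw [sum_JJ hT] at h1
    rw [sum_smul_JJ hT]
    exact ⟨fun p => w (p, 0), fun q => w (0, q), fun i hi => h0 _ (by simp [mem_JJ, hi]),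
      fun i hi => h0 _ (by simp [mem_JJ, hi]), h1, rfl, rfl⟩
  · rintro ⟨c, d, hc, hd, h1, h2, h3⟩
    have hg : ∀ q ∈ U, ∀ p, glue c d (p, q) = d q := fun q hq p =>
      glue_r _ _ (by rintro rfl; exact hU hq) p
    refine ⟨glue c d, ?_, ?_, ?_⟩
    · rintro ⟨x, y⟩ hi
      rcases mem_JJ.1 hi with ⟨h3, h4⟩ | ⟨h3, h4⟩
      · simp only at h4 h3; subst h4; rw [glue_l]; exact hc _ h3
      · simp only at h4 h3; rw [hg _ h4]; exact hd _ h4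
    · rw [sum_JJ hT, ← h1]
      simp only [glue_l]
      congr 1
      exact Finset.sum_congr rfl fun q hq => hg q hq _
    · rw [sum_smul_JJ hT]
      simp only [glue_l]
      ext
      · exact h2
      · rw [← h3]
        exact Finset.sum_congr rfl fun q hq => by rw [hg q hq]

theorem hull_ins {T : Finset E} (hT : (0 : E) ∉ T) {x : E} :
    x ∈ convexHull ℝ (insert 0 (T : Set E)) ↔ ∃ c : E → ℝ, (∀ i ∈ T, 0 ≤ c i) ∧
      ∑ i ∈ T, c i ≤ 1 ∧ ∑ i ∈ T, c i • i = x := by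
  classical
  rw [← Finset.coe_insert, Finset.mem_convexHull']
  constructor
  · rintro ⟨w, h0, h1, rfl⟩
    rw [Finset.sum_insert hT] at h1 ⊢
    refine ⟨w, fun i hi => h0 i (by simp [hi]), ?_, by simp⟩
    have := h0 0 (by simp)
    linarith
  · rintro ⟨c, h0, h1, rfl⟩
    have hne : ∀ i ∈ T, i ≠ 0 := by rintro i hi rfl; exact hT hi
    refine ⟨fun i => if i = 0 then 1 - ∑ i ∈ T, c i else c i, ?_, ?_, ?_⟩
    · intro i hi
      by_cases h : i = 0
      · simp only [h, if_true]; linarith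
      · simp only [h, if_false]; exact h0 i (by simpa [h] using hi)
    · rw [Finset.sum_insert hT, Finset.sum_congr rfl (fun i hi => if_neg (hne i hi))]
      simp
    · rw [Finset.sum_insert hT, smul_zero, zero_add]
      exact Finset.sum_congr rfl (fun i hi => by simp [hne i hi])

theorem zero_JJ {T : Finset E} {U : Finset F} (hT : (0 : E) ∉ T) (hU : (0 : F) ∉ U) :
    (0 : E × F) ∉ JJ T U := by
  simp [mem_JJ, hT, hU]

theorem hull_ins_JJ {T : Finset E} {U : Finset F} (hT : (0 : E) ∉ T) (hU : (0 : F) ∉ U)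
    {z : E × F} :
    z ∈ convexHull ℝ (insert 0 (JJ T U : Set (E × F))) ↔
      ∃ (c : E → ℝ) (d : F → ℝ), (∀ i ∈ T, 0 ≤ c i) ∧
      (∀ i ∈ U, 0 ≤ d i) ∧ ∑ i ∈ T, c i + ∑ i ∈ U, d i ≤ 1 ∧ ∑ i ∈ T, c i • i = z.1 ∧
      ∑ i ∈ U, d i • i = z.2 := by
  rw [hull_ins (zero_JJ hT hU)]
  constructor
  · rintro ⟨w, h0, h1, rfl⟩
    rw [sum_JJ hT] at h1
    rw [sum_smul_JJ hT]
    exact ⟨fun p => w (p, 0), fun q => w (0, q), fun i hi => h0 _ (by simp [mem_JJ, hi]),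
      fun i hi => h0 _ (by simp [mem_JJ, hi]), h1, rfl, rfl⟩
  · rintro ⟨c, d, hc, hd, h1, h2, h3⟩
    have hg : ∀ q ∈ U, ∀ p, glue c d (p, q) = d q := fun q hq p =>
      glue_r _ _ (by rintro rfl; exact hU hq) p
    refine ⟨glue c d, ?_, ?_, ?_⟩
    · rintro ⟨x, y⟩ hi
      rcases mem_JJ.1 hi with ⟨h3, h4⟩ | ⟨h3, h4⟩
      · simp only at h4 h3; subst h4; rw [glue_l]; exact hc _ h3
      · simp only at h4 h3; rw [hg _ h4]; exact hd _ h4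
    · rw [sum_JJ hT]
      simp only [glue_l]
      rwa [Finset.sum_congr rfl fun q hq => hg q hq _]
    · rw [sum_smul_JJ hT]
      simp only [glue_l]
      ext
      · exact h2
      · rw [← h3]
        exact Finset.sum_congr rfl fun q hq => by rw [hg q hq]

theorem scale1 {P : Set E} {T : Finset E} (hP : Convex ℝ P) (h0 : (0 : E) ∈ P)
    (hT : IsExtreme ℝ P (convexHull ℝ (T : Set E))) (hz : (0 : E) ∉ convexHull ℝ (T : Set E))
    {c : E → ℝ} (hc : ∀ i ∈ T, 0 ≤ c i) {a b : ℝ} (ha : 0 ≤ a) (hb : 0 ≤ b)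
    {p p' : E} (hp : p ∈ P) (hp' : p' ∈ P) (he : ∑ i ∈ T, c i • i = a • p + b • p') :
    ∑ i ∈ T, c i ≤ a + b := by
  by_contra! hlt
  set σ := ∑ i ∈ T, c i with hσ
  have hs : 0 < σ := by linarith
  have hf : σ⁻¹ • (a • p + b • p') ∈ convexHull ℝ (T : Set E) := by
    rw [← he, Finset.mem_convexHull']
    refine ⟨fun i => σ⁻¹ * c i, fun i hi => mul_nonneg (by positivity) (hc i hi), ?_, ?_⟩
    · rw [← Finset.mul_sum, ← hσ]; field_simp
    · simp_rw [mul_smul]; rw [Finset.smul_sum]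
  rcases (add_nonneg ha hb).eq_or_lt with hu | hu
  · have h1 : a = 0 := by linarith
    have h2 : b = 0 := by linarith
    rw [h1, h2] at hf
    simp at hf
    exact hz hf
  · apply hz
    have hw : (a / (a + b)) • p + (b / (a + b)) • p' ∈ P :=
      hP hp hp' (by positivity) (by positivity) (by field_simp)
    refine hT.left_mem_of_mem_openSegment h0 hw hf
      ⟨1 - (a + b) / σ, (a + b) / σ, ?_, by positivity, by ring, ?_⟩
    · rw [sub_pos, div_lt_one hs]; exact hlt
    · rw [smul_zero, zero_add, smul_add, smul_add, smul_smul, smul_smul, smul_smul, smul_smul]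
      congr 2 <;> field_simp

theorem scale2 {P : Set E} {T : Finset E}
    (hT : IsExtreme ℝ P (convexHull ℝ (T : Set E)))
    {c : E → ℝ} (hc : ∀ i ∈ T, 0 ≤ c i) {a b s s' : ℝ} (ha : 0 < a) (hb : 0 < b)
    (hs : 0 ≤ s) (hs' : 0 ≤ s')
    {p p' : E} (hp : p ∈ P) (hp' : p' ∈ P)
    (he : ∑ i ∈ T, c i • i = (a * s) • p + (b * s') • p')
    (hsum : ∑ i ∈ T, c i = a * s + b * s') :
    ∃ c' : E → ℝ, (∀ i ∈ T, 0 ≤ c' i) ∧ ∑ i ∈ T, c' i = s ∧ ∑ i ∈ T, c' i • i = s • p := by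
  rcases hs.eq_or_lt with rfl | hs
  · exact ⟨fun _ => 0, by simp, by simp, by simp⟩
  have hpT : p ∈ convexHull ℝ (T : Set E) := by
    set σ := ∑ i ∈ T, c i with hσ
    have hs0 : 0 < σ := by rw [hsum]; positivity
    have hf : σ⁻¹ • ((a * s) • p + (b * s') • p') ∈ convexHull ℝ (T : Set E) := by
      rw [← he, Finset.mem_convexHull']
      refine ⟨fun i => σ⁻¹ * c i, fun i hi => mul_nonneg (by positivity) (hc i hi), ?_, ?_⟩
      · rw [← Finset.mul_sum, ← hσ]; field_simp
      · simp_rw [mul_smul]; rw [Finset.smul_sum]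
    rcases hs'.eq_or_lt with rfl | hs'
    · simp only [mul_zero, zero_smul, add_zero] at hf hsum
      rw [hsum, inv_smul_smul₀ (by positivity)] at hf
      exact hf
    · refine hT.left_mem_of_mem_openSegment hp hp' hf
        ⟨σ⁻¹ * (a * s), σ⁻¹ * (b * s'), by positivity, by positivity, ?_, ?_⟩
      · rw [← mul_add, ← hsum]; field_simp
      · rw [smul_add, smul_smul, smul_smul]
  rw [Finset.mem_convexHull'] at hpT
  obtain ⟨w, h0, h1, h2⟩ := hpT
  refine ⟨fun i => s * w i, fun i hi => mul_nonneg hs.le (h0 i hi), ?_, ?_⟩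
  · rw [← Finset.mul_sum, h1, mul_one]
  · simp_rw [mul_smul]; rw [← Finset.smul_sum, h2]

theorem scale3 {P : Set E} {T : Finset E} (h0T : (0 : E) ∉ T) (hP : Convex ℝ P) (h0 : (0 : E) ∈ P)
    (hT : IsExtreme ℝ P (convexHull ℝ (insert 0 (T : Set E))))
    {c : E → ℝ} (hc : ∀ i ∈ T, 0 ≤ c i) {a b s s' : ℝ} (ha : 0 < a) (hb : 0 < b) (hab : a + b = 1)
    (hs : 0 ≤ s) (hs' : 0 ≤ s') (hs1 : s ≤ 1) (hs1' : s' ≤ 1)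
    {p p' : E} (hp : p ∈ P) (hp' : p' ∈ P)
    (he : ∑ i ∈ T, c i • i = (a * s) • p + (b * s') • p')
    (hsum : ∑ i ∈ T, c i ≤ 1) :
    ∃ c' : E → ℝ, (∀ i ∈ T, 0 ≤ c' i) ∧ ∑ i ∈ T, c' i ≤ s ∧ ∑ i ∈ T, c' i • i = s • p := by
  rcases hs.eq_or_lt with rfl | hs
  · exact ⟨fun _ => 0, by simp, by simp, by simp⟩
  have hpT : p ∈ convexHull ℝ (insert 0 (T : Set E)) := by
    have hf : (a * s) • p + (b * s') • p' ∈ convexHull ℝ (insert 0 (T : Set E)) := by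
      rw [← he, hull_ins h0T]
      exact ⟨c, hc, hsum, rfl⟩
    have h1 : s • p ∈ convexHull ℝ (insert 0 (T : Set E)) := by
      refine hT.left_mem_of_mem_openSegment (hP.smul_mem_of_zero_mem h0 hp ⟨hs.le, hs1⟩)
        (hP.smul_mem_of_zero_mem h0 hp' ⟨hs', hs1'⟩) hf ⟨a, b, ha, hb, hab, ?_⟩
      rw [smul_smul, smul_smul]
    rcases hs1.eq_or_lt with rfl | hs1
    · simpa using h1
    · refine hT.left_mem_of_mem_openSegment hp h0 h1
        ⟨s, 1 - s, hs, by linarith, by ring, by simp⟩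
  rw [hull_ins h0T] at hpT
  obtain ⟨w, h0, h1, h2⟩ := hpT
  refine ⟨fun i => s * w i, fun i hi => mul_nonneg hs.le (h0 i hi), ?_, ?_⟩
  · rw [← Finset.mul_sum]; nlinarith
  · simp_rw [mul_smul]; rw [← Finset.smul_sum, h2]

theorem hull_scale {P : Set E} {T : Finset E} (hP : Convex ℝ P) (h0 : (0 : E) ∈ P)
    (hT : convexHull ℝ (T : Set E) ⊆ P) {c : E → ℝ} (hc : ∀ i ∈ T, 0 ≤ c i) {s : ℝ}
    (hs : ∑ i ∈ T, c i ≤ s) : ∃ p ∈ P, s • p = ∑ i ∈ T, c i • i := by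
  have hnn := Finset.sum_nonneg hc
  rcases hnn.eq_or_lt with h | h
  · refine ⟨0, h0, ?_⟩
    have := (Finset.sum_eq_zero_iff_of_nonneg hc).1 h.symm
    rw [smul_zero, Finset.sum_eq_zero]
    intro i hi; rw [this i hi, zero_smul]
  · have hs0 : 0 < s := by linarith
    refine ⟨∑ i ∈ T, (c i / s) • i, ?_, ?_⟩
    · have h1 : ∑ i ∈ T, (c i / ∑ i ∈ T, c i) • i ∈ P := by
        apply hT
        rw [Finset.mem_convexHull']
        exact ⟨_, fun i hi => div_nonneg (hc i hi) hnn, by rw [← Finset.sum_div]; field_simp, rfl⟩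
      have h2 := hP.smul_mem_of_zero_mem h0 h1 (t := (∑ i ∈ T, c i) / s)
        ⟨by positivity, by rwa [div_le_one hs0]⟩
      convert h2 using 1
      rw [Finset.smul_sum]
      apply Finset.sum_congr rfl
      intro i _
      rw [smul_smul]; congr 1; field_simp
    · rw [Finset.smul_sum]
      apply Finset.sum_congr rfl
      intro i _
      rw [smul_smul]; congr 1; field_simp

theorem MM_comp {P : Set E} {Q : Set F} (hP : Convex ℝ P) (hQ : Convex ℝ Q)
    (h0P : (0 : E) ∈ P.extremePoints ℝ) (h0Q : (0 : F) ∈ Q.extremePoints ℝ) {i j : ℕ}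
    {T : Finset E} {U : Finset F} (hT : T ∈ MM P i) (hU : U ∈ MM Q j) :
    JJ T U ∈ MM (Join P Q) (i + j) := by
  have hT0 := linInd_zero hT.1
  have hU0 := linInd_zero hU.1
  refine ⟨(linInd_JJ hT0 hU0).2 ⟨hT.1, hU.1⟩, ⟨?_, ?_⟩, by rw [card_JJ hT0, hT.2.2, hU.2.2]⟩
  · intro z hz
    rw [hull_JJ hT0 hU0] at hz
    obtain ⟨c, d, hc, hd, h1, h2, h3⟩ := hz
    refine ⟨_, _, Finset.sum_nonneg hc, Finset.sum_nonneg hd, h1, ?_, ?_⟩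
    · rw [← h2]; exact hull_scale hP h0P.1 hT.2.1.subset hc le_rfl
    · rw [← h3]; exact hull_scale hQ h0Q.1 hU.2.1.subset hd le_rfl
  · rintro ⟨x, y⟩ ⟨s, t, hs, ht, hst, ⟨p, hp, hx⟩, ⟨q, hq, hy⟩⟩ ⟨x', y'⟩
      ⟨s', t', hs', ht', hst', ⟨p', hp', hx'⟩, ⟨q', hq', hy'⟩⟩ z hz ⟨a, b, ha, hb, hab, he⟩
    simp only at hx hy hx' hy'
    subst hx hy hx' hy'
    rw [hull_JJ hT0 hU0] at hz ⊢
    obtain ⟨c, d, hc, hd, h1, h2, h3⟩ := hz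
    rw [← he] at h2 h3
    simp only [Prod.fst_add, Prod.smul_fst, Prod.snd_add, Prod.smul_snd, smul_smul] at h2 h3
    have e1 := scale1 hP h0P.1 hT.2.1 (fun h => hT0 (zero_mem_of_hull h0P hT.2.1 h)) hc
      (mul_nonneg ha.le hs) (mul_nonneg hb.le hs') hp hp' h2
    have e2 := scale1 hQ h0Q.1 hU.2.1 (fun h => hU0 (zero_mem_of_hull h0Q hU.2.1 h)) hd
      (mul_nonneg ha.le ht) (mul_nonneg hb.le ht') hq hq' h3
    have e3 : a * s + b * s' + (a * t + b * t') = 1 := by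
      have : a * s + b * s' + (a * t + b * t') = a * (s + t) + b * (s' + t') := by ring
      rw [this, hst, hst', mul_one, mul_one, hab]
    obtain ⟨c', k1, k2, k3⟩ := scale2 hT.2.1 hc ha hb hs hs' hp hp' h2 (by linarith)
    obtain ⟨d', l1, l2, l3⟩ := scale2 hU.2.1 hd ha hb ht ht' hq hq' h3 (by linarith)
    exact ⟨c', d', k1, l1, by rw [k2, l2, hst], k3, l3⟩

theorem NN_comp {P : Set E} {Q : Set F} (hP : Convex ℝ P) (hQ : Convex ℝ Q)
    (h0P : (0 : E) ∈ P) (h0Q : (0 : F) ∈ Q) {i j : ℕ}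
    {T : Finset E} {U : Finset F} (hT : T ∈ NN P i) (hU : U ∈ NN Q j) :
    JJ T U ∈ NN (Join P Q) (i + j) := by
  have hT0 := linInd_zero hT.1
  have hU0 := linInd_zero hU.1
  refine ⟨(linInd_JJ hT0 hU0).2 ⟨hT.1, hU.1⟩, ⟨?_, ?_⟩, by rw [card_JJ hT0, hT.2.2, hU.2.2]⟩
  · intro z hz
    rw [hull_ins_JJ hT0 hU0] at hz
    obtain ⟨c, d, hc, hd, h1, h2, h3⟩ := hz
    have hn := Finset.sum_nonneg hd
    refine ⟨1 - ∑ i ∈ U, d i, _, by linarith [Finset.sum_nonneg hc], hn, by ring, ?_, ?_⟩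
    · rw [← h2]; exact hull_scale hP h0P (NN_sub_MM hT).2.1.subset hc (by linarith)
    · rw [← h3]; exact hull_scale hQ h0Q (NN_sub_MM hU).2.1.subset hd le_rfl
  · rintro ⟨x, y⟩ ⟨s, t, hs, ht, hst, ⟨p, hp, hx⟩, ⟨q, hq, hy⟩⟩ ⟨x', y'⟩
      ⟨s', t', hs', ht', hst', ⟨p', hp', hx'⟩, ⟨q', hq', hy'⟩⟩ z hz ⟨a, b, ha, hb, hab, he⟩
    simp only at hx hy hx' hy'
    subst hx hy hx' hy'
    rw [hull_ins_JJ hT0 hU0] at hz ⊢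
    obtain ⟨c, d, hc, hd, h1, h2, h3⟩ := hz
    rw [← he] at h2 h3
    simp only [Prod.fst_add, Prod.smul_fst, Prod.snd_add, Prod.smul_snd, smul_smul] at h2 h3
    have hn := Finset.sum_nonneg hd
    have hn' := Finset.sum_nonneg hc
    obtain ⟨c', k1, k2, k3⟩ := scale3 hT0 hP h0P hT.2.1 hc ha hb hab hs hs' (by linarith)
      (by linarith) hp hp' h2 (by linarith)
    obtain ⟨d', l1, l2, l3⟩ := scale3 hU0 hQ h0Q hU.2.1 hd ha hb hab ht ht' (by linarith)
      (by linarith) hq hq' h3 (by linarith)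
    exact ⟨c', d', k1, l1, by linarith, k3, l3⟩

theorem join_l {P : Set E} {Q : Set F} (hP : Convex ℝ P) (h0P : (0 : E) ∈ P) (h0Q : (0 : F) ∈ Q)
    (x : E) : (x, (0 : F)) ∈ Join P Q ↔ x ∈ P := by
  constructor
  · rintro ⟨s, t, hs, ht, hst, ⟨p, hp, hx⟩, -⟩
    simp only at hx
    rw [← hx]
    exact hP.smul_mem_of_zero_mem h0P hp ⟨hs, by linarith⟩
  · intro h
    exact ⟨1, 0, by simp, by simp, by simp, ⟨x, h, by simp⟩, ⟨0, h0Q, by simp⟩⟩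

theorem join_r {P : Set E} {Q : Set F} (hQ : Convex ℝ Q) (h0P : (0 : E) ∈ P) (h0Q : (0 : F) ∈ Q)
    (x : F) : ((0 : E), x) ∈ Join P Q ↔ x ∈ Q := by
  constructor
  · rintro ⟨s, t, hs, ht, hst, -, ⟨p, hp, hx⟩⟩
    simp only at hx
    rw [← hx]
    exact hQ.smul_mem_of_zero_mem h0Q hp ⟨ht, by linarith⟩
  · intro h
    exact ⟨0, 1, by simp, by simp, by simp, ⟨0, h0P, by simp⟩, ⟨x, h, by simp⟩⟩

theorem extreme_l {P : Set E} {Q : Set F} (hP : Convex ℝ P) (h0P : (0 : E) ∈ P) (h0Q : (0 : F) ∈ Q)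
    {G : Set (E × F)} (hG : IsExtreme ℝ (Join P Q) G) {H : Set E}
    (hH : ∀ x, x ∈ H ↔ (x, (0 : F)) ∈ G) : IsExtreme ℝ P H := by
  refine ⟨fun x hx => (join_l hP h0P h0Q x).1 (hG.subset ((hH x).1 hx)), ?_⟩
  rintro x hx y hy z hz ⟨a, b, ha, hb, hab, he⟩
  rw [hH] at hz ⊢
  refine hG.left_mem_of_mem_openSegment ((join_l hP h0P h0Q x).2 hx) ((join_l hP h0P h0Q y).2 hy) hz
    ⟨a, b, ha, hb, hab, ?_⟩
  ext <;> simp [← he]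

theorem extreme_r {P : Set E} {Q : Set F} (hQ : Convex ℝ Q) (h0P : (0 : E) ∈ P) (h0Q : (0 : F) ∈ Q)
    {G : Set (E × F)} (hG : IsExtreme ℝ (Join P Q) G) {H : Set F}
    (hH : ∀ x, x ∈ H ↔ ((0 : E), x) ∈ G) : IsExtreme ℝ Q H := by
  refine ⟨fun x hx => (join_r hQ h0P h0Q x).1 (hG.subset ((hH x).1 hx)), ?_⟩
  rintro x hx y hy z hz ⟨a, b, ha, hb, hab, he⟩
  rw [hH] at hz ⊢
  refine hG.left_mem_of_mem_openSegment ((join_r hQ h0P h0Q x).2 hx) ((join_r hQ h0P h0Q y).2 hy) hz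
    ⟨a, b, ha, hb, hab, ?_⟩
  ext <;> simp [← he]

theorem split_JJ {P : Set E} {Q : Set F} (h0P : (0 : E) ∈ P) (h0Q : (0 : F) ∈ Q)
    {T : Finset (E × F)} (h0 : (0 : E × F) ∉ T) (hT : ∀ t ∈ T, t ∈ (Join P Q).extremePoints ℝ) :
    ∃ (T₁ : Finset E) (T₂ : Finset F), (0 : E) ∉ T₁ ∧ (0 : F) ∉ T₂ ∧ T = JJ T₁ T₂ := by
  classical
  have key : ∀ t ∈ T, t.1 = 0 ∨ t.2 = 0 := by
    intro t ht
    obtain ⟨⟨s, s', hs, hs', hss, ⟨p, hp, hx⟩, ⟨q, hq, hy⟩⟩, hext⟩ := hT t ht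
    rcases hs.eq_or_lt with rfl | hs
    · left; rw [← hx]; simp
    rcases hs'.eq_or_lt with rfl | hs'
    · right; rw [← hy]; simp
    right
    have h1 : (p, (0 : F)) ∈ Join P Q :=
      ⟨1, 0, by simp, by simp, by simp, ⟨p, hp, by simp⟩, ⟨0, h0Q, by simp⟩⟩
    have h2 : ((0 : E), q) ∈ Join P Q :=
      ⟨0, 1, by simp, by simp, by simp, ⟨0, h0P, by simp⟩, ⟨q, hq, by simp⟩⟩
    have := hext h1 h2 ⟨s, s', hs, hs', hss, by ext <;> simp [hx, hy]⟩
    rw [← this]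
  refine ⟨(T.filter (fun t => t.2 = 0)).image Prod.fst, (T.filter (fun t => t.1 = 0)).image Prod.snd,
    ?_, ?_, ?_⟩
  · simp only [Finset.mem_image, Finset.mem_filter, not_exists, not_and, and_imp]
    rintro ⟨x, y⟩ hz hy hx
    simp only at hx hy; subst hx hy; exact h0 hz
  · simp only [Finset.mem_image, Finset.mem_filter, not_exists, not_and, and_imp]
    rintro ⟨x, y⟩ hz hy hx
    simp only at hx hy; subst hx hy; exact h0 hz
  · ext ⟨x, y⟩
    rw [mem_JJ]
    simp only [Finset.mem_image, Finset.mem_filter, Prod.exists, exists_and_right, exists_eq_right]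
    constructor
    · intro h
      rcases key _ h with h1 | h1
      · simp only at h1; subst h1; right; exact ⟨rfl, h⟩
      · simp only at h1; subst h1; left; exact ⟨h, rfl⟩
    · rintro (⟨h, rfl⟩ | ⟨rfl, h⟩) <;> exact h

theorem MM_decomp {P : Set E} {Q : Set F} (hP : Convex ℝ P) (hQ : Convex ℝ Q)
    (h0P : (0 : E) ∈ P) (h0Q : (0 : F) ∈ Q) {n : ℕ}
    {T : Finset (E × F)} (hT : T ∈ MM (Join P Q) n) :
    ∃ T₁ T₂, T₁ ∈ MM P T₁.card ∧ T₂ ∈ MM Q T₂.card ∧ T₁.card + T₂.card = n ∧ T = JJ T₁ T₂ := by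
  have hext := hT.2.1.extremePoints_subset_extremePoints
  rw [affInd_extremePoints (affInd_of_linInd hT.1)] at hext
  obtain ⟨T₁, T₂, h1, h2, rfl⟩ := split_JJ h0P h0Q (linInd_zero hT.1) (fun t ht => hext ht)
  obtain ⟨l1, l2⟩ := (linInd_JJ h1 h2).1 hT.1
  refine ⟨T₁, T₂, ⟨l1, extreme_l hP h0P h0Q hT.2.1 ?_, rfl⟩,
    ⟨l2, extreme_r hQ h0P h0Q hT.2.1 ?_, rfl⟩, by rw [← card_JJ h1, hT.2.2], rfl⟩
  · intro x
    rw [hull_JJ h1 h2, Finset.mem_convexHull']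
    constructor
    · rintro ⟨c, hc, hc1, hcx⟩
      exact ⟨c, fun _ => 0, hc, by simp, by simpa using hc1, hcx, by simp⟩
    · rintro ⟨c, d, hc, hd, h3, h4, h5⟩
      have := linInd_iff.1 l2 d h5
      rw [Finset.sum_eq_zero (s := T₂) this, add_zero] at h3
      exact ⟨c, hc, h3, h4⟩
  · intro x
    rw [hull_JJ h1 h2, Finset.mem_convexHull']
    constructor
    · rintro ⟨c, hc, hc1, hcx⟩
      exact ⟨fun _ => 0, c, by simp, hc, by simpa using hc1, by simp, hcx⟩
    · rintro ⟨c, d, hc, hd, h3, h4, h5⟩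
      have := linInd_iff.1 l1 c h4
      rw [Finset.sum_eq_zero (s := T₁) this, zero_add] at h3
      exact ⟨d, hd, h3, h5⟩

theorem NN_decomp {P : Set E} {Q : Set F} (hP : Convex ℝ P) (hQ : Convex ℝ Q)
    (h0P : (0 : E) ∈ P) (h0Q : (0 : F) ∈ Q) {n : ℕ}
    {T : Finset (E × F)} (hT : T ∈ NN (Join P Q) n) :
    ∃ T₁ T₂, T₁ ∈ NN P T₁.card ∧ T₂ ∈ NN Q T₂.card ∧ T₁.card + T₂.card = n ∧ T = JJ T₁ T₂ := by
  have hext := (NN_sub_MM hT).2.1.extremePoints_subset_extremePoints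
  rw [affInd_extremePoints (affInd_of_linInd hT.1)] at hext
  obtain ⟨T₁, T₂, h1, h2, rfl⟩ := split_JJ h0P h0Q (linInd_zero hT.1) (fun t ht => hext ht)
  obtain ⟨l1, l2⟩ := (linInd_JJ h1 h2).1 hT.1
  refine ⟨T₁, T₂, ⟨l1, extreme_l hP h0P h0Q hT.2.1 ?_, rfl⟩,
    ⟨l2, extreme_r hQ h0P h0Q hT.2.1 ?_, rfl⟩, by rw [← card_JJ h1, hT.2.2], rfl⟩
  · intro x
    rw [hull_ins_JJ h1 h2, hull_ins h1]
    constructor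
    · rintro ⟨c, hc, hc1, hcx⟩
      exact ⟨c, fun _ => 0, hc, by simp, by simpa using hc1, hcx, by simp⟩
    · rintro ⟨c, d, hc, hd, h3, h4, h5⟩
      have := linInd_iff.1 l2 d h5
      rw [Finset.sum_eq_zero (s := T₂) this, add_zero] at h3
      exact ⟨c, hc, h3, h4⟩
  · intro x
    rw [hull_ins_JJ h1 h2, hull_ins h2]
    constructor
    · rintro ⟨c, hc, hc1, hcx⟩
      exact ⟨fun _ => 0, c, by simp, hc, by simpa using hc1, by simp, hcx⟩
    · rintro ⟨c, d, hc, hd, h3, h4, h5⟩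
      have := linInd_iff.1 l1 c h4
      rw [Finset.sum_eq_zero (s := T₁) this, zero_add] at h3
      exact ⟨d, hd, h3, h5⟩

/-- Counting lemma for joins. -/
theorem count_JJ (M₁ : ℕ → Set (Finset E)) (M₂ : ℕ → Set (Finset F)) (M : Set (Finset (E × F)))
    (n : ℕ) (h1 : ∀ i, ∀ T ∈ M₁ i, T.card = i ∧ (0 : E) ∉ T)
    (h2 : ∀ i, ∀ T ∈ M₂ i, T.card = i ∧ (0 : F) ∉ T)
    (f1 : ∀ i, (M₁ i).Finite) (f2 : ∀ i, (M₂ i).Finite)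
    (hc : ∀ i j T U, T ∈ M₁ i → U ∈ M₂ j → i + j = n → JJ T U ∈ M)
    (hd : ∀ T ∈ M, ∃ T₁ T₂, T₁ ∈ M₁ T₁.card ∧ T₂ ∈ M₂ T₂.card ∧ T₁.card + T₂.card = n ∧
      T = JJ T₁ T₂) :
    M.ncard = ∑ ij ∈ Finset.HasAntidiagonal.antidiagonal n, (M₁ ij.1).ncard * (M₂ ij.2).ncard := by
  classical
  have e : M = (((Finset.HasAntidiagonal.antidiagonal n).biUnion
      (fun ij => (f1 ij.1).toFinset ×ˢ (f2 ij.2).toFinset)).image (fun p => JJ p.1 p.2) :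
        Finset (Finset (E × F))) := by
    ext T
    simp only [Finset.coe_image, Set.mem_image, Finset.mem_coe, Finset.mem_biUnion,
      Finset.mem_product, Set.Finite.mem_toFinset, Finset.HasAntidiagonal.mem_antidiagonal, Prod.exists]
    constructor
    · intro h
      obtain ⟨T₁, T₂, a1, a2, a3, rfl⟩ := hd T h
      exact ⟨T₁, T₂, ⟨_, _, a3, a1, a2⟩, rfl⟩
    · rintro ⟨T₁, T₂, ⟨i, j, a3, a1, a2⟩, rfl⟩
      exact hc i j _ _ a1 a2 a3
  rw [e, Set.ncard_coe_finset, Finset.card_image_of_injOn, Finset.card_biUnion]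
  · apply Finset.sum_congr rfl
    intro ij _
    rw [Finset.card_product, Set.ncard_eq_toFinset_card _ (f1 _), Set.ncard_eq_toFinset_card _ (f2 _)]
  · rintro ⟨i, j⟩ _ ⟨i', j'⟩ _ hne
    rw [Function.onFun, Finset.disjoint_left]
    rintro ⟨T, U⟩ a b
    simp only [Finset.mem_product, Set.Finite.mem_toFinset] at a b
    apply hne
    rw [← (h1 _ _ a.1).1, ← (h1 _ _ b.1).1, ← (h2 _ _ a.2).1, ← (h2 _ _ b.2).1]
  · rintro ⟨T, U⟩ a ⟨T', U'⟩ b h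
    simp only [Finset.mem_coe, Finset.mem_biUnion,
      Finset.mem_product, Set.Finite.mem_toFinset, Finset.HasAntidiagonal.mem_antidiagonal] at a b
    obtain ⟨_, _, a1, a2⟩ := a
    obtain ⟨_, _, b1, b2⟩ := b
    obtain ⟨rfl, rfl⟩ := JJ_inj (h1 _ _ a1).2 (h1 _ _ b1).2 (h2 _ _ a2).2 (h2 _ _ b2).2 h
    rfl

theorem MM_finite {P : Set E} (hf : (P.extremePoints ℝ).Finite) (n : ℕ) : (MM P n).Finite :=
  (Simp_finite hf).subset MM_sub

theorem NN_finite {P : Set E} (hf : (P.extremePoints ℝ).Finite) (n : ℕ) : (NN P n).Finite :=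
  (MM_finite hf n).subset NN_sub_MM

theorem MM_join {P : Set E} {Q : Set F} (hP : Convex ℝ P) (hQ : Convex ℝ Q)
    (h0P : (0 : E) ∈ P.extremePoints ℝ) (h0Q : (0 : F) ∈ Q.extremePoints ℝ)
    (fP : (P.extremePoints ℝ).Finite) (fQ : (Q.extremePoints ℝ).Finite) (n : ℕ) :
    (MM (Join P Q) n).ncard =
      ∑ ij ∈ Finset.HasAntidiagonal.antidiagonal n, (MM P ij.1).ncard * (MM Q ij.2).ncard := by
  apply count_JJ
  · exact fun i T h => ⟨h.2.2, linInd_zero h.1⟩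
  · exact fun i T h => ⟨h.2.2, linInd_zero h.1⟩
  · exact MM_finite fP
  · exact MM_finite fQ
  · rintro i j T U hT hU rfl
    exact MM_comp hP hQ h0P h0Q hT hU
  · intro T hT
    exact MM_decomp hP hQ h0P.1 h0Q.1 hT

theorem NN_join {P : Set E} {Q : Set F} (hP : Convex ℝ P) (hQ : Convex ℝ Q)
    (h0P : (0 : E) ∈ P.extremePoints ℝ) (h0Q : (0 : F) ∈ Q.extremePoints ℝ)
    (fP : (P.extremePoints ℝ).Finite) (fQ : (Q.extremePoints ℝ).Finite) (n : ℕ) :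
    (NN (Join P Q) n).ncard =
      ∑ ij ∈ Finset.HasAntidiagonal.antidiagonal n, (NN P ij.1).ncard * (NN Q ij.2).ncard := by
  apply count_JJ
  · exact fun i T h => ⟨h.2.2, linInd_zero h.1⟩
  · exact fun i T h => ⟨h.2.2, linInd_zero h.1⟩
  · exact NN_finite fP
  · exact NN_finite fQ
  · rintro i j T U hT hU rfl
    exact NN_comp hP hQ h0P.1 h0Q.1 hT hU
  · intro T hT
    exact NN_decomp hP hQ h0P.1 h0Q.1 hT

end JoinSection

/-! ### Affine transport -/

section Transport

variable {F : Type*} [AddCommGroup F] [Module ℝ F]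

theorem extreme_image (φ : E ≃ᵃ[ℝ] F) {P G : Set E} (h : IsExtreme ℝ P G) :
    IsExtreme ℝ (φ '' P) (φ '' G) := by
  refine ⟨image_mono h.1, ?_⟩
  rintro _ ⟨x, hx, rfl⟩ _ ⟨y, hy, rfl⟩ _ ⟨z, hz, rfl⟩ hzo
  have := image_openSegment ℝ φ.toAffineMap x y
  have h2 : φ z ∈ φ.toAffineMap '' openSegment ℝ x y := by rw [this]; exact hzo
  obtain ⟨z', hz', he⟩ := h2
  have : z' = z := φ.injective he
  subst this
  exact ⟨x, h.2 hx hy hz hz', rfl⟩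

theorem extremePoints_image (φ : E ≃ᵃ[ℝ] F) {P : Set E} :
    φ '' (P.extremePoints ℝ) ⊆ (φ '' P).extremePoints ℝ := by
  rintro _ ⟨x, hx, rfl⟩
  have := extreme_image φ (isExtreme_singleton.2 hx)
  rw [image_singleton] at this
  exact isExtreme_singleton.1 this

theorem extremePoints_finite_image (φ : E ≃ᵃ[ℝ] F) {P : Set E} (h : (P.extremePoints ℝ).Finite) :
    ((φ '' P).extremePoints ℝ).Finite := by
  have h1 := extremePoints_image φ.symm (P := φ '' P)
  have h2 : φ.symm '' (φ '' P) = P := by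
    rw [image_image]; simp
  rw [h2] at h1
  exact Finite.of_finite_image (h.subset h1) φ.symm.injective.injOn

theorem Simp_image (φ : E ≃ᵃ[ℝ] F) {P : Set E} {T : Finset E} (h : T ∈ Simp P) :
    T.map φ.toEquiv.toEmbedding ∈ Simp (φ '' P) := by
  refine ⟨?_, ?_⟩
  · have h1 := (h.1.map' φ.toAffineMap φ.injective).range
    have h2 : Set.range (φ.toAffineMap ∘ ((↑) : T → E)) =
        ((T.map φ.toEquiv.toEmbedding : Finset F) : Set F) := by
      rw [range_comp]; simp
    rw [h2] at h1
    exact h1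
  · have h1 := extreme_image φ h.2
    have h2 := AffineMap.image_convexHull φ.toAffineMap (T : Set E)
    have h3 : φ '' (convexHull ℝ (T : Set E)) =
      convexHull ℝ ((T.map φ.toEquiv.toEmbedding : Finset F) : Set F) := by
      rw [Finset.coe_map]; exact h2
    rw [h3] at h1
    exact h1

theorem Simp_le (φ : E ≃ᵃ[ℝ] F) {P : Set E} (hf : ((φ '' P).extremePoints ℝ).Finite) (n : ℕ) :
    {T | T ∈ Simp P ∧ T.card = n}.ncard ≤ {T | T ∈ Simp (φ '' P) ∧ T.card = n}.ncard := by
  refine Set.ncard_le_ncard_of_injOn (fun T => T.map φ.toEquiv.toEmbedding) ?_ ?_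
    ((Simp_finite hf).subset (fun T h => h.1))
  · rintro T ⟨h1, h2⟩
    exact ⟨Simp_image φ h1, by simpa using h2⟩
  · intro a _ b _ h
    exact Finset.map_injective _ h

theorem Simp_transport (φ : E ≃ᵃ[ℝ] F) {P : Set E} {Q : Set F} (hQ : φ '' P = Q)
    (hf : (P.extremePoints ℝ).Finite) (n : ℕ) :
    {T | T ∈ Simp P ∧ T.card = n}.ncard = {T | T ∈ Simp Q ∧ T.card = n}.ncard := by
  subst hQ
  apply le_antisymm (Simp_le φ (extremePoints_finite_image φ hf) n)
  have h2 : φ.symm '' (φ '' P) = P := by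
    rw [image_image]; simp
  have := Simp_le φ.symm (P := φ '' P) (by rwa [h2]) n
  rwa [h2] at this

end Transport

/-! ### Polyhedra have finitely many extreme points -/

theorem polyhedron_finite {ι : Type*} [Finite ι] (f : ι → E →ₗ[ℝ] ℝ) (b : ι → ℝ) :
    ({x | ∀ i, f i x ≤ b i}.extremePoints ℝ).Finite := by
  classical
  apply Set.Finite.of_injOn (f := fun x => {i | f i x = b i}) (t := Set.univ)
    (fun _ _ => mem_univ _) _ finite_univ
  intro x hx y hy hxy
  by_contra hne
  have key : ∀ i, ∀ᶠ ε in nhdsWithin (0:ℝ) (Ioi 0), f i (x + ε • (x - y)) ≤ b i := by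
    intro i
    have hx1 := hx.1 i
    rcases hx1.lt_or_eq with h | h
    · have : Filter.Tendsto (fun ε : ℝ => f i (x + ε • (x - y))) (nhdsWithin (0:ℝ) (Ioi 0))
        (nhds (f i x)) := by
        have h2 : Continuous (fun ε : ℝ => f i (x + ε • (x - y))) := by
          simp only [map_add, map_smul]; fun_prop
        have := h2.tendsto 0
        simp only [zero_smul, add_zero] at this
        exact this.mono_left nhdsWithin_le_nhds
      exact (this.eventually_lt_const h).mono fun _ h => h.le
    · have h' : i ∈ {i | f i y = b i} := by
        have h5 : {i | f i x = b i} = {i | f i y = b i} := hxy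
        rw [← h5]; exact h
      have h' : f i y = b i := h'
      refine Filter.Eventually.of_forall fun ε => ?_
      simp [h, h']
  have key2 := (Filter.eventually_all.2 key).and (self_mem_nhdsWithin)
  obtain ⟨ε, h1, h2⟩ := key2.exists
  have h2 : 0 < ε := h2
  have h3 := hx.2 hy.1 (x₂ := x + ε • (x - y)) h1 ?_
  · exact hne h3.symm
  · refine ⟨ε / (1 + ε), 1 / (1 + ε), by positivity, by positivity, by field_simp; ring, ?_⟩
    have : (1 + ε) ≠ 0 := by positivity
    have h4 : x = (1 / (1+ε)) • ((1 + ε) • x) := by rw [smul_smul]; field_simp; simp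
    conv_rhs => rw [h4]
    rw [div_eq_inv_mul, mul_smul, div_eq_inv_mul, mul_one, ← smul_add]
    congr 1
    module

section Poly

set_option linter.unusedSectionVars false

variable {A : Type*} [Fintype A] [PartialOrder A]

theorem order_finite : ((orderPolytope A).extremePoints ℝ).Finite := by
  classical
  have : orderPolytope A = {x | ∀ i : A ⊕ A ⊕ {pq : A × A // pq.1 ≤ pq.2},
    (Sum.elim (fun p => -LinearMap.proj p) (Sum.elim (fun p => LinearMap.proj p)
      (fun pq => (LinearMap.proj pq.1.1 : (A → ℝ) →ₗ[ℝ] ℝ) - LinearMap.proj pq.1.2)) i : (A → ℝ) →ₗ[ℝ] ℝ) x ≤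
      (Sum.elim (fun _ => 0) (Sum.elim (fun _ => 1) (fun _ => 0)) i : ℝ)} := by
    ext x
    simp only [orderPolytope, mem_ofPred_eq, Sum.forall]
    simp
    grind
  rw [this]
  exact polyhedron_finite _ _

theorem chain_finite : ((chainPolytope A).extremePoints ℝ).Finite := by
  classical
  have : chainPolytope A = {x | ∀ i : A ⊕ {s : Finset A // IsChain (· ≤ ·) (s : Set A)},
    (Sum.elim (fun p => -LinearMap.proj p) 
      (fun s => ∑ p ∈ s.1, LinearMap.proj p) i : (A → ℝ) →ₗ[ℝ] ℝ) x ≤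
      (Sum.elim (fun _ => 0) (fun _ => 1) i : ℝ)} := by
    ext x
    simp only [chainPolytope, mem_ofPred_eq, Sum.forall]
    simp
  rw [this]
  exact polyhedron_finite _ _

theorem order_convex : Convex ℝ (orderPolytope A) := by
  intro x hx y hy a b ha hb hab
  refine ⟨fun p => ⟨?_, ?_⟩, fun p q h => ?_⟩
  · have := (hx.1 p).1; have := (hy.1 p).1
    simp only [Pi.add_apply, Pi.smul_apply, smul_eq_mul]; positivity
  · have := (hx.1 p).2; have := (hy.1 p).2
    simp only [Pi.add_apply, Pi.smul_apply, smul_eq_mul]; nlinarith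
  · have := (hx.2 p q h); have := (hy.2 p q h)
    simp only [Pi.add_apply, Pi.smul_apply, smul_eq_mul]; nlinarith

theorem chain_convex : Convex ℝ (chainPolytope A) := by
  intro x hx y hy a b ha hb hab
  refine ⟨fun p => ?_, fun s h => ?_⟩
  · have := (hx.1 p); have := (hy.1 p)
    simp only [Pi.add_apply, Pi.smul_apply, smul_eq_mul]; positivity
  · have := (hx.2 s h); have := (hy.2 s h)
    simp only [Pi.add_apply, Pi.smul_apply, smul_eq_mul, Finset.sum_add_distrib, ← Finset.mul_sum]
    nlinarith

theorem zero_extreme_of_nonneg {P : Set (A → ℝ)} (h0 : 0 ∈ P) (h : ∀ x ∈ P, ∀ p, 0 ≤ x p) :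
    (0 : A → ℝ) ∈ P.extremePoints ℝ := by
  refine ⟨h0, ?_⟩
  rintro x hx y hy ⟨a, b, ha, hb, hab, he⟩
  ext p
  have := congrFun he p
  simp only [Pi.add_apply, Pi.smul_apply, smul_eq_mul, Pi.zero_apply] at this
  have h1 := h x hx p
  have h2 := h y hy p
  have h3 : a * x p = 0 := by nlinarith [mul_nonneg ha.le h1, mul_nonneg hb.le h2]
  simpa [ha.ne'] using h3

theorem order_zero : (0 : A → ℝ) ∈ (orderPolytope A).extremePoints ℝ :=
  zero_extreme_of_nonneg ⟨fun p => by simp, fun p q h => by simp⟩ fun x hx p => (hx.1 p).1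

theorem chain_zero : (0 : A → ℝ) ∈ (chainPolytope A).extremePoints ℝ :=
  zero_extreme_of_nonneg ⟨fun p => by simp, fun p q => by simp⟩ fun x hx p => (hx.1 p)

end Poly

/-! ### The polytopes of an ordinal sum are joins -/

section Ordinal

set_option linter.unusedSectionVars false

variable {A B : Type*} [Fintype A] [PartialOrder A] [Fintype B] [PartialOrder B]

theorem order_scale {x : A → ℝ} {s : ℝ} (hs : 0 ≤ s) (h : ∀ p, 0 ≤ x p ∧ x p ≤ s)
    (hm : ∀ p q : A, p ≤ q → x p ≤ x q) : ∃ p ∈ orderPolytope A, s • p = x := by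
  rcases hs.eq_or_lt with rfl | hs
  · refine ⟨0, order_zero.1, ?_⟩
    ext p
    have := h p
    simp only [zero_smul, Pi.zero_apply]
    linarith [this.1, this.2]
  · refine ⟨s⁻¹ • x, ⟨fun p => ⟨?_, ?_⟩, fun p q hpq => ?_⟩, ?_⟩
    · have := (h p).1
      simp only [Pi.smul_apply, smul_eq_mul]; positivity
    · have := (h p).2
      simp only [Pi.smul_apply, smul_eq_mul]
      rw [inv_mul_le_iff₀ hs]; linarith
    · have := hm p q hpq
      simp only [Pi.smul_apply, smul_eq_mul]
      gcongr
    · rw [smul_smul, mul_inv_cancel₀ hs.ne', one_smul]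

theorem chain_scale {x : A → ℝ} {s : ℝ} (hs : 0 ≤ s) (h : ∀ p, 0 ≤ x p)
    (hm : ∀ c : Finset A, IsChain (· ≤ ·) (c : Set A) → ∑ p ∈ c, x p ≤ s) :
    ∃ p ∈ chainPolytope A, s • p = x := by
  rcases hs.eq_or_lt with rfl | hs
  · refine ⟨0, chain_zero.1, ?_⟩
    ext p
    have := h p
    have h2 := hm {p} (by simp)
    simp only [Finset.sum_singleton] at h2
    simp only [zero_smul, Pi.zero_apply]
    linarith
  · refine ⟨s⁻¹ • x, ⟨fun p => ?_, fun c hc => ?_⟩, ?_⟩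
    · have := (h p)
      simp only [Pi.smul_apply, smul_eq_mul]; positivity
    · have := hm c hc
      simp only [Pi.smul_apply, smul_eq_mul, ← Finset.mul_sum]
      rw [inv_mul_le_iff₀ hs]; linarith
    · rw [smul_smul, mul_inv_cancel₀ hs.ne', one_smul]

variable (A B) in
/-- Splitting coordinates of an ordinal sum. -/
def splitL : ((A ⊕ₗ B) → ℝ) ≃ₗ[ℝ] (A → ℝ) × (Bᵒᵈ → ℝ) where
  toFun x := (fun a => x (Sum.inlₗ a), fun b => x (Sum.inrₗ (OrderDual.ofDual b)))
  map_add' _ _ := rfl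
  map_smul' _ _ := rfl
  invFun z := fun c => Sum.elim z.1 (fun b => z.2 (OrderDual.toDual b)) (ofLex c)
  left_inv x := by
    ext c
    rcases c with c | c <;> rfl
  right_inv z := rfl

variable (A B) in
noncomputable def splitO : ((A ⊕ₗ B) → ℝ) ≃ᵃ[ℝ] (A → ℝ) × (Bᵒᵈ → ℝ) :=
  ((splitL A B).trans ((LinearEquiv.refl ℝ (A → ℝ)).prodCongr
    (LinearEquiv.neg ℝ (M := Bᵒᵈ → ℝ)))).toAffineEquiv.trans
    (AffineEquiv.constVAdd ℝ _ ((0 : A → ℝ), (1 : Bᵒᵈ → ℝ)))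

theorem splitO_apply (x : (A ⊕ₗ B) → ℝ) : splitO A B x =
    (fun a => x (Sum.inlₗ a), fun b => 1 - x (Sum.inrₗ (OrderDual.ofDual b))) := by
  simp only [splitO, splitL]
  ext b
  · simp
    rfl
  · simp [sub_eq_add_neg]
    rfl

theorem image_of_iff {X Y : Type*} (f : X ≃ Y) {P : Set X} {Q : Set Y} (h : ∀ x, f x ∈ Q ↔ x ∈ P) :
    f '' P = Q := by
  ext y
  constructor
  · rintro ⟨x, hx, rfl⟩
    exact (h x).2 hx
  · intro hy
    exact ⟨f.symm y, (h _).1 (by simpa using hy), by simp⟩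

theorem order_join : splitO A B '' orderPolytope (A ⊕ₗ B) =
    Join (orderPolytope A) (orderPolytope Bᵒᵈ) := by
  classical
  apply image_of_iff (splitO A B).toEquiv
  intro x
  change splitO A B x ∈ _ ↔ _
  rw [splitO_apply]
  constructor
  · rintro ⟨s, t, hs, ht, hst, ⟨p, hp, h1⟩, ⟨q, hq, h2⟩⟩
    have h1 : ∀ a, x (Sum.inlₗ a) = s * p a := fun a => (congrFun h1 a).symm
    have h2 : ∀ b, x (Sum.inrₗ b) = 1 - t * q (OrderDual.toDual b) := fun b => by
      have := congrFun h2 (OrderDual.toDual b)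
      simp at this
      linarith
    have a1 : ∀ a, 0 ≤ s * p a := fun a => mul_nonneg hs (hp.1 a).1
    have a2 : ∀ a, s * p a ≤ s := fun a => mul_le_of_le_one_right hs (hp.1 a).2
    have b1 : ∀ a, 0 ≤ t * q a := fun a => mul_nonneg ht (hq.1 a).1
    have b2 : ∀ a, t * q a ≤ t := fun a => mul_le_of_le_one_right ht (hq.1 a).2
    refine ⟨fun c => ?_, fun c d hcd => ?_⟩
    · rcases c with a | b
      · change 0 ≤ x (Sum.inlₗ a) ∧ x (Sum.inlₗ a) ≤ 1
        rw [h1]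
        exact ⟨a1 a, by linarith [a2 a]⟩
      · change 0 ≤ x (Sum.inrₗ b) ∧ x (Sum.inrₗ b) ≤ 1
        rw [h2]
        exact ⟨by linarith [b2 (OrderDual.toDual b)], by linarith [b1 (OrderDual.toDual b)]⟩
    · rcases c with a | b <;> rcases d with a' | b'
      · change x (Sum.inlₗ a) ≤ x (Sum.inlₗ a')
        rw [h1, h1]
        exact mul_le_mul_of_nonneg_left (hp.2 _ _ (Sum.Lex.inl_le_inl_iff.1 hcd)) hs
      · change x (Sum.inlₗ a) ≤ x (Sum.inrₗ b')
        rw [h1, h2]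
        linarith [a2 a, b2 (OrderDual.toDual b')]
      · exact absurd hcd Sum.Lex.not_inr_le_inl
      · change x (Sum.inrₗ b) ≤ x (Sum.inrₗ b')
        rw [h2, h2]
        have := mul_le_mul_of_nonneg_left (hq.2 (OrderDual.toDual b') (OrderDual.toDual b)
          (OrderDual.toDual_le_toDual.2 (Sum.Lex.inr_le_inr_iff.1 hcd))) ht
        linarith
  · intro hx
    let S : Finset ℝ := insert 0 (Finset.univ.image fun a : A => x (Sum.inlₗ a))
    have hS : S.Nonempty := Finset.insert_nonempty _ _
    obtain ⟨hs0, hsa, hsm⟩ : 0 ≤ S.max' hS ∧ (∀ a, x (Sum.inlₗ a) ≤ S.max' hS) ∧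
        S.max' hS ∈ S := by
      refine ⟨Finset.le_max' _ _ (by simp [S]), fun a => Finset.le_max' _ _ (by simp [S]),
        Finset.max'_mem _ _⟩
    generalize S.max' hS = s at hs0 hsa hsm
    have hsb : ∀ b, s ≤ x (Sum.inrₗ b) := by
      intro b
      simp only [S, Finset.mem_insert, Finset.mem_image, Finset.mem_univ, true_and] at hsm
      rcases hsm with rfl | ⟨a, rfl⟩
      · exact (hx.1 _).1
      · exact hx.2 _ _ (Sum.Lex.inl_le_inr _ _)
    have hs1 : s ≤ 1 := by
      simp only [S, Finset.mem_insert, Finset.mem_image, Finset.mem_univ, true_and] at hsm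
      rcases hsm with rfl | ⟨a, rfl⟩
      · exact zero_le_one
      · exact (hx.1 _).2
    refine ⟨s, 1 - s, hs0, by linarith, by ring, ?_, ?_⟩
    · exact order_scale hs0 (fun p => ⟨(hx.1 _).1, hsa p⟩)
        (fun p q h => hx.2 _ _ (Sum.Lex.inl_le_inl_iff.2 h))
    · apply order_scale (A := Bᵒᵈ) (by linarith)
      · intro p
        have := hsb (OrderDual.ofDual p)
        have := (hx.1 (Sum.inrₗ (OrderDual.ofDual p))).2
        constructor <;> simp only <;> linarith
      · intro p q h
        have := hx.2 (Sum.inrₗ (OrderDual.ofDual q)) (Sum.inrₗ (OrderDual.ofDual p))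
          (Sum.Lex.inr_le_inr_iff.2 h)
        simp only
        linarith

/-- The union of a subset of `A` and one of `B`. -/
def lexSum (c : Finset A) (d : Finset Bᵒᵈ) : Finset (A ⊕ₗ B) :=
  c.disjSum (β := B) d

theorem sum_lexSum (c : Finset A) (d : Finset Bᵒᵈ) (x : (A ⊕ₗ B) → ℝ) :
    ∑ p ∈ lexSum c d, x p = ∑ a ∈ c, x (Sum.inlₗ a) +
      ∑ b ∈ d, x (Sum.inrₗ (OrderDual.ofDual b)) :=
  Finset.sum_disjSum c (κ := B) d x

theorem chain_lexSum {c : Finset A} {d : Finset Bᵒᵈ} (hc : IsChain (· ≤ ·) (c : Set A))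
    (hd : IsChain (· ≤ ·) (d : Set Bᵒᵈ)) :
    IsChain (· ≤ ·) (lexSum c d : Set (A ⊕ₗ B)) := by
  intro p hp q hq hpq
  have hp : p ∈ c.disjSum (β := B) d := hp
  have hq : q ∈ c.disjSum (β := B) d := hq
  rcases p with a | b <;> rcases q with a' | b'
  · have h1 := hc (Finset.inl_mem_disjSum.1 hp) (Finset.inl_mem_disjSum.1 hq)
      (fun h => hpq (by rw [h]))
    rcases h1 with h | h
    · exact Or.inl (Sum.Lex.inl_le_inl_iff.2 h)
    · exact Or.inr (Sum.Lex.inl_le_inl_iff.2 h)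
  · exact Or.inl (Sum.Lex.inl_le_inr _ _)
  · exact Or.inr (Sum.Lex.inl_le_inr _ _)
  · have h1 := hd (Finset.inr_mem_disjSum.1 hp) (Finset.inr_mem_disjSum.1 hq)
      (fun h => hpq (congrArg Sum.inr h))
    rcases h1 with h | h
    · exact Or.inr (Sum.Lex.inr_le_inr_iff.2 h)
    · exact Or.inl (Sum.Lex.inr_le_inr_iff.2 h)

theorem exists_lexSum (u : Finset (A ⊕ₗ B)) (hu : IsChain (· ≤ ·) (u : Set (A ⊕ₗ B))) :
    ∃ (c : Finset A) (d : Finset Bᵒᵈ), IsChain (· ≤ ·) (c : Set A) ∧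
      IsChain (· ≤ ·) (d : Set Bᵒᵈ) ∧ lexSum c d = u := by
  refine ⟨Finset.toLeft (α := A) (β := B) u, Finset.toRight (α := A) (β := B) u, ?_, ?_,
    Finset.toLeft_disjSum_toRight (α := A) (β := B)⟩
  · intro a ha b hb hab
    have h := hu (Finset.mem_toLeft.1 ha) (Finset.mem_toLeft.1 hb) (fun h => hab (Sum.inl.inj h))
    rcases h with h | h
    · exact Or.inl (Sum.Lex.inl_le_inl_iff.1 h)
    · exact Or.inr (Sum.Lex.inl_le_inl_iff.1 h)
  · intro a ha b hb hab
    have h := hu (Finset.mem_toRight.1 ha) (Finset.mem_toRight.1 hb) (fun h => hab (Sum.inr.inj h))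
    rcases h with h | h
    · exact Or.inr (Sum.Lex.inr_le_inr_iff (α := A) (β := B).1 h)
    · exact Or.inl (Sum.Lex.inr_le_inr_iff (α := A) (β := B).1 h)

theorem chain_join : (splitL A B).toAffineEquiv '' chainPolytope (A ⊕ₗ B) =
    Join (chainPolytope A) (chainPolytope Bᵒᵈ) := by
  classical
  apply image_of_iff (splitL A B).toAffineEquiv.toEquiv
  intro x
  change ((fun a => x (Sum.inlₗ a), fun b : Bᵒᵈ => x (Sum.inrₗ (OrderDual.ofDual b))) :
    (A → ℝ) × (Bᵒᵈ → ℝ)) ∈ _ ↔ _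
  constructor
  · rintro ⟨s, t, hs, ht, hst, ⟨p, hp, h1⟩, ⟨q, hq, h2⟩⟩
    have h1 : ∀ a, x (Sum.inlₗ a) = s * p a := fun a => (congrFun h1 a).symm
    have h2 : ∀ b : Bᵒᵈ, x (Sum.inrₗ (OrderDual.ofDual b)) = t * q b :=
      fun b => (congrFun h2 b).symm
    refine ⟨fun c => ?_, fun u hu => ?_⟩
    · rcases c with a | b
      · change 0 ≤ x (Sum.inlₗ a)
        rw [h1]
        exact mul_nonneg hs (hp.1 a)
      · change 0 ≤ x (Sum.inrₗ (OrderDual.ofDual (OrderDual.toDual b)))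
        rw [h2]
        exact mul_nonneg ht (hq.1 _)
    · obtain ⟨c, d, hc, hd, rfl⟩ := exists_lexSum u hu
      rw [sum_lexSum]
      simp_rw [h1, h2, ← Finset.mul_sum]
      have := mul_le_of_le_one_right hs (hp.2 c hc)
      have := mul_le_of_le_one_right ht (hq.2 d hd)
      linarith
  · intro hx
    obtain ⟨c, hc, hmax⟩ := Finset.exists_max_image
      (Finset.univ.filter fun c : Finset A => IsChain (· ≤ ·) (c : Set A))
      (fun c => ∑ a ∈ c, x (Sum.inlₗ a)) ⟨∅, by simp⟩
    simp only [Finset.mem_filter, Finset.mem_univ, true_and] at hc hmax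
    have key : ∀ d : Finset Bᵒᵈ, IsChain (· ≤ ·) (d : Set Bᵒᵈ) →
        ∑ a ∈ c, x (Sum.inlₗ a) + ∑ b ∈ d, x (Sum.inrₗ (OrderDual.ofDual b)) ≤ 1 := by
      intro d hd
      rw [← sum_lexSum]
      exact hx.2 _ (chain_lexSum hc hd)
    have h0 : 0 ≤ ∑ a ∈ c, x (Sum.inlₗ a) := Finset.sum_nonneg fun a _ => hx.1 _
    have h1 := key ∅ (by simp)
    simp only [Finset.sum_empty] at h1
    refine ⟨∑ a ∈ c, x (Sum.inlₗ a), 1 - ∑ a ∈ c, x (Sum.inlₗ a), h0, by linarith, by ring, ?_, ?_⟩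
    · exact chain_scale h0 (fun p => hx.1 _) hmax
    · apply chain_scale (A := Bᵒᵈ) (by linarith) (fun p => hx.1 _)
      intro d hd
      have := key d hd
      linarith

variable (B) in
noncomputable def flip1 : (B → ℝ) ≃ᵃ[ℝ] (Bᵒᵈ → ℝ) :=
  (LinearEquiv.neg ℝ (M := B → ℝ)).toAffineEquiv.trans
    (AffineEquiv.constVAdd ℝ _ (1 : B → ℝ))

theorem order_flip : flip1 B '' orderPolytope B = orderPolytope Bᵒᵈ := by
  apply image_of_iff (flip1 B).toEquiv
  intro x
  have h : ∀ b : B, (flip1 B).toEquiv x (OrderDual.toDual b) = 1 - x b := by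
    intro b
    change 1 + - x b = _
    ring
  constructor
  · intro hx
    refine ⟨fun p => ?_, fun p q hpq => ?_⟩
    · have := hx.1 (OrderDual.toDual p)
      rw [h] at this
      constructor <;> linarith [this.1, this.2]
    · have := hx.2 (OrderDual.toDual q) (OrderDual.toDual p) hpq
      rw [h, h] at this
      linarith
  · intro hx
    refine ⟨fun p => ?_, fun p q hpq => ?_⟩
    · have := hx.1 (OrderDual.ofDual p)
      have h' := h (OrderDual.ofDual p)
      rw [OrderDual.toDual_ofDual] at h'
      rw [h']
      constructor <;> linarith [this.1, this.2]
    · have := hx.2 (OrderDual.ofDual q) (OrderDual.ofDual p) hpq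
      have h' := h (OrderDual.ofDual p)
      have h'' := h (OrderDual.ofDual q)
      rw [OrderDual.toDual_ofDual] at h' h''
      rw [h', h'']
      linarith

theorem chain_flip : (chainPolytope Bᵒᵈ : Set (B → ℝ)) = chainPolytope B := by
  ext x
  constructor
  · intro hx
    exact ⟨fun p => hx.1 p, fun s hs => hx.2 s (fun a ha b hb h => (hs ha hb h).symm)⟩
  · intro hx
    exact ⟨fun p => hx.1 p, fun s hs => hx.2 s (fun a ha b hb h => (hs ha hb h).symm)⟩

end Ordinal

/-! ### Simplex faces through the origin -/

section Origin

set_option linter.unusedSectionVars false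

variable {A : Type*} [Fintype A] [PartialOrder A]

theorem mem_of_mem_span {T : Finset E} (hT : LinearIndependent ℝ ((↑) : T → E)) {T' : Set E}
    (h : T' ⊆ T) {t : E} (ht : t ∈ T) (hs : t ∈ Submodule.span ℝ T') : t ∈ T' := by
  by_contra hc
  have := hT.notMem_span_image (s := {i | (i : E) ∈ T'}) (x := ⟨t, ht⟩) hc
  apply this
  have h2 : ((↑) : T → E) '' {i | (i : E) ∈ T'} = T' := by
    ext y
    constructor
    · rintro ⟨i, hi, rfl⟩; exact hi
    · intro hy; exact ⟨⟨y, h hy⟩, hy, rfl⟩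
  rw [h2]
  exact hs

theorem extreme_of_01 {P : Set (A → ℝ)} (hP : ∀ x ∈ P, ∀ p, 0 ≤ x p ∧ x p ≤ 1) {x : A → ℝ}
    (hx : x ∈ P) (h : ∀ p, x p = 0 ∨ x p = 1) : x ∈ P.extremePoints ℝ := by
  refine ⟨hx, ?_⟩
  rintro y hy z hz ⟨a, b, ha, hb, hab, he⟩
  ext p
  have e := congrFun he p
  simp only [Pi.add_apply, Pi.smul_apply, smul_eq_mul] at e
  obtain ⟨y0, y1⟩ := hP y hy p
  obtain ⟨z0, z1⟩ := hP z hz p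
  rcases h p with h | h
  · rw [h] at e ⊢
    have : a * y p = 0 := by nlinarith [mul_nonneg ha.le y0, mul_nonneg hb.le z0]
    simpa [ha.ne'] using this
  · rw [h] at e ⊢
    have : a * (1 - y p) = 0 := by
      nlinarith [mul_nonneg ha.le (sub_nonneg.2 y1), mul_nonneg hb.le (sub_nonneg.2 z1)]
    have : 1 - y p = 0 := by simpa [ha.ne'] using this
    linarith

theorem chain_le_one {x : A → ℝ} (hx : x ∈ chainPolytope A) (p : A) : 0 ≤ x p ∧ x p ≤ 1 :=
  ⟨hx.1 p, by simpa using hx.2 {p} (by simp)⟩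

open Classical in
noncomputable def ee (p : A) : A → ℝ := Pi.single p 1

theorem ee_self (p : A) : ee p p = 1 := by simp [ee]
theorem ee_ne {p q : A} (h : q ≠ p) : ee p q = 0 := by simp [ee, h]
theorem ee_01 (p q : A) : ee p q = 0 ∨ ee p q = 1 := by
  by_cases h : q = p
  · subst h; right; exact ee_self _
  · left; exact ee_ne h
theorem ee_nonneg (p q : A) : 0 ≤ ee p q := by
  rcases ee_01 p q with h | h <;> rw [h]
  exact zero_le_one
theorem ee_inj : Function.Injective (ee : A → A → ℝ) := by
  intro p q h
  by_contra hc
  have := congrFun h p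
  rw [ee_self, ee_ne hc] at this
  exact one_ne_zero this
open Classical in
theorem ee_sum (p : A) (s : Finset A) : ∑ q ∈ s, ee p q = if p ∈ s then 1 else 0 := by
  simp [ee, Finset.sum_pi_single']

theorem ee_mem (p : A) : ee p ∈ chainPolytope A := by
  classical
  refine ⟨ee_nonneg p, fun s _ => ?_⟩
  rw [ee_sum]; split_ifs <;> norm_num

theorem ee_add_mem {p q : A} (h1 : ¬ p ≤ q) (h2 : ¬ q ≤ p) : ee p + ee q ∈ chainPolytope A := by
  classical
  refine ⟨fun r => add_nonneg (ee_nonneg p r) (ee_nonneg q r), fun s hs => ?_⟩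
  simp only [Pi.add_apply, Finset.sum_add_distrib]
  rw [ee_sum, ee_sum]
  by_cases hp : p ∈ s
  · by_cases hq : q ∈ s
    · have hpq : p ≠ q := fun h => h1 h.le
      exact absurd (hs hp hq hpq) (by tauto)
    · simp [hp, hq]
  · split_ifs <;> norm_num

theorem NN_chain {n : ℕ} {T : Finset (A → ℝ)} (hT : T ∈ NN (chainPolytope A) n) :
    ∃ S : Finset A, IsChain (· ≤ ·) (S : Set A) ∧ (T : Set (A → ℝ)) = ee '' (S : Set A) := by
  classical
  obtain ⟨hli, hex, hcard⟩ := hT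
  have h0 : (0 : A → ℝ) ∈ convexHull ℝ (insert 0 (T : Set (A → ℝ))) :=
    subset_convexHull _ _ (mem_insert _ _)
  have hTG : ∀ t ∈ T, t ∈ convexHull ℝ (insert 0 (T : Set (A → ℝ))) := fun t ht =>
    subset_convexHull _ _ (mem_insert_of_mem _ ht)
  -- extreme points of the polytope lying in the face are vertices
  have hvert : ∀ x ∈ convexHull ℝ (insert 0 (T : Set (A → ℝ))), x ∈ chainPolytope A → x ≠ 0 →
      (∀ p, x p = 0 ∨ x p = 1) → x ∈ T := by
    intro x hx hxC hx0 h01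
    have h1 := extreme_of_01 (fun y hy => chain_le_one hy) hxC h01
    have h2 : x ∈ (convexHull ℝ (insert 0 (T : Set (A → ℝ)))).extremePoints ℝ := by
      rw [hex.extremePoints_eq]; exact ⟨hx, h1⟩
    have h3 := extremePoints_convexHull_subset h2
    rcases h3 with h3 | h3
    · exact absurd h3 hx0
    · exact h3
  let S : Finset A := Finset.univ.filter fun p => ∃ t ∈ T, t p ≠ 0
  have hS : ∀ p ∈ S, ee p ∈ convexHull ℝ (insert 0 (T : Set (A → ℝ))) := by
    intro p hp
    obtain ⟨t, ht, htp⟩ := (Finset.mem_filter.1 hp).2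
    have htC := hex.1 (hTG t ht)
    have hz : (1/2 : ℝ) • t ∈ convexHull ℝ (insert 0 (T : Set (A → ℝ))) := by
      have := (convex_convexHull ℝ (insert 0 (T : Set (A → ℝ)))) h0 (hTG t ht)
        (a := 1/2) (b := 1/2) (by norm_num) (by norm_num) (by norm_num)
      simpa using this
    obtain ⟨t0, t1⟩ := chain_le_one htC p
    have tpos : 0 < t p := lt_of_le_of_ne t0 (Ne.symm htp)
    have hy : (1/2 : ℝ) • t + (t p / 2) • ((1/2 : ℝ) • t - ee p) ∈ chainPolytope A := by
      refine ⟨fun q => ?_, fun s hs => ?_⟩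
      · simp only [Pi.add_apply, Pi.smul_apply, Pi.sub_apply, smul_eq_mul]
        by_cases hq : q = p
        · subst hq
          rw [ee_self]; nlinarith
        · rw [ee_ne hq]
          have := htC.1 q
          simp only [sub_zero]
          positivity
      · have h1 := htC.2 s hs
        have h2 : 0 ≤ ∑ q ∈ s, ee p q := Finset.sum_nonneg fun q _ => ee_nonneg p q
        simp only [Pi.add_apply, Pi.smul_apply, Pi.sub_apply, smul_eq_mul, Finset.sum_add_distrib,
          ← Finset.mul_sum, Finset.sum_sub_distrib]
        nlinarith [mul_nonneg t0 h2]
    refine hex.2 (ee_mem p) hy hz ?_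
    refine ⟨(t p / 2) / (1 + t p / 2), 1 / (1 + t p / 2), by positivity, by positivity,
      by field_simp; ring, ?_⟩
    ext q
    simp only [Pi.add_apply, Pi.smul_apply, Pi.sub_apply, smul_eq_mul]
    field_simp
    ring
  have hST : ∀ p ∈ S, ee p ∈ T := fun p hp =>
    hvert _ (hS p hp) (ee_mem p) (fun h => by
      have := congrFun h p
      rw [ee_self] at this
      exact one_ne_zero this) (ee_01 p)
  have hST' : ee '' (S : Set A) ⊆ T := by
    rintro _ ⟨p, hp, rfl⟩; exact hST p hp
  refine ⟨S, ?_, Subset.antisymm ?_ hST'⟩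
  · intro p hp q hq hpq
    by_contra hc
    simp only [not_or] at hc
    have hm := ee_add_mem hc.1 hc.2
    have h1 : ee p + ee q ∈ convexHull ℝ (insert 0 (T : Set (A → ℝ))) := by
      refine hex.2 hm (hex.1 h0) (z := (1/2 : ℝ) • ee p + (1/2 : ℝ) • ee q) ?_ ?_
      · exact (convex_convexHull ℝ _) (hS p hp) (hS q hq) (by norm_num) (by norm_num) (by norm_num)
      · exact ⟨1/2, 1/2, by norm_num, by norm_num, by norm_num, by simp⟩
    have h2 : ee p + ee q ∈ T := by
      apply hvert _ h1 hm
      · intro h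
        have := congrFun h p
        simp only [Pi.add_apply, ee_self, ee_ne hpq, Pi.zero_apply] at this
        norm_num at this
      · intro r
        by_cases hr : r = p
        · subst hr; right; simp [ee_self, ee_ne hpq]
        · rcases ee_01 q r with h | h <;> simp [ee_ne hr, h]
    have h3 := mem_of_mem_span hli hST' h2 (Submodule.add_mem _
      (Submodule.subset_span ⟨p, hp, rfl⟩) (Submodule.subset_span ⟨q, hq, rfl⟩))
    obtain ⟨r, hr, he⟩ := h3
    have e1 := congrFun he p
    have e2 := congrFun he q
    simp only [Pi.add_apply, ee_self, ee_ne hpq, ee_ne hpq.symm] at e1 e2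
    by_cases hrp : p = r
    · subst hrp
      rw [ee_ne hpq.symm] at e2; norm_num at e2
    · rw [ee_ne hrp] at e1; norm_num at e1
  · intro t ht
    apply mem_of_mem_span hli hST' ht
    have : t = ∑ p ∈ S, t p • ee p := by
      ext q
      simp only [Finset.sum_apply, Pi.smul_apply, smul_eq_mul]
      by_cases hq : q ∈ S
      · rw [Finset.sum_eq_single_of_mem q hq]
        · rw [ee_self, mul_one]
        · intro b _ hb; rw [ee_ne hb.symm, mul_zero]
      · rw [Finset.sum_eq_zero]
        · by_contra hne
          exact hq (Finset.mem_filter.2 ⟨Finset.mem_univ _, t, ht, hne⟩)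
        · intro b hb
          have hqb : q ≠ b := by
            rintro rfl; exact hq hb
          rw [ee_ne hqb, mul_zero]
    rw [this]
    exact Submodule.sum_mem _ fun p hp => Submodule.smul_mem _ _ (Submodule.subset_span ⟨p, hp, rfl⟩)

theorem NN_chain_le (n : ℕ) : (NN (chainPolytope A) n).ncard ≤
    {S : Finset A | IsChain (· ≤ ·) (S : Set A) ∧ S.card = n}.ncard := by
  classical
  have : NN (chainPolytope A) n ⊆
      (fun S : Finset A => S.image ee) '' {S : Finset A | IsChain (· ≤ ·) (S : Set A) ∧ S.card = n} := by
    intro T hT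
    obtain ⟨S, hS, he⟩ := NN_chain hT
    have he : S.image ee = T := by
      apply Finset.coe_injective; rw [Finset.coe_image, he]
    refine ⟨S, ⟨hS, ?_⟩, he⟩
    rw [← hT.2.2, ← he, Finset.card_image_of_injective _ ee_inj]
  exact (Set.ncard_le_ncard this (Set.toFinite _)).trans (Set.ncard_image_le (Set.toFinite _))

/-- Characteristic vector of a principal filter. -/
noncomputable def uu (p : A) : A → ℝ := chi (Ici p)

theorem uu_le {p q : A} (h : p ≤ q) : uu p q = 1 := by simp [uu, chi, h]
theorem uu_not {p q : A} (h : ¬ p ≤ q) : uu p q = 0 := by simp [uu, chi, h]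
theorem uu_le' {p q : A} (h : uu p q ≠ 0) : p ≤ q := by
  by_contra hc; exact h (uu_not hc)
theorem uu_nonneg (p q : A) : 0 ≤ uu p q := by
  by_cases h : p ≤ q
  · rw [uu_le h]; exact zero_le_one
  · rw [uu_not h]
theorem uu_le_one (p q : A) : uu p q ≤ 1 := by
  by_cases h : p ≤ q
  · rw [uu_le h]
  · rw [uu_not h]; exact zero_le_one
theorem uu_mono (p : A) {q r : A} (h : q ≤ r) : uu p q ≤ uu p r := by
  by_cases h' : p ≤ q
  · rw [uu_le h', uu_le (h'.trans h)]
  · rw [uu_not h']; exact uu_nonneg _ _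
theorem uu_inj : Function.Injective (uu : A → A → ℝ) := by
  intro p q h
  apply le_antisymm
  · apply uu_le'; rw [h, uu_le le_rfl]; exact one_ne_zero
  · apply uu_le'; rw [← h, uu_le le_rfl]; exact one_ne_zero

theorem uu_indep (S : Finset A) (u : A → ℝ) (h : ∑ p ∈ S, u p • uu p = 0) : ∀ p ∈ S, u p = 0 := by
  classical
  intro q
  induction q using WellFoundedLT.induction with
  | ind q ih =>
    intro hq
    have := congrFun h q
    simp only [Finset.sum_apply, Pi.smul_apply, smul_eq_mul, Pi.zero_apply] at this
    rw [Finset.sum_eq_single_of_mem q hq] at this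
    · rwa [uu_le le_rfl, mul_one] at this
    · intro p hp hpq
      by_cases hle : p ≤ q
      · rw [ih p (lt_of_le_of_ne hle hpq) hp, zero_mul]
      · rw [uu_not hle, mul_zero]

/-- The face of the order polytope attached to a chain. -/
def FF (S : Finset A) : Set (A → ℝ) :=
  {x | (∀ q, (∀ p ∈ S, ¬ p ≤ q) → x q = 0) ∧
    (∀ p ∈ S, ∀ q, p ≤ q → (∀ r ∈ S, r ≤ q → r ≤ p) → x q = x p)}

theorem FF_decomp (n : ℕ) : ∀ (S : Finset A) (_ : S.card = n) (_ : IsChain (· ≤ ·) (S : Set A))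
    (M : ℝ) (_ : 0 ≤ M) (x : A → ℝ) (_ : ∀ p, 0 ≤ x p ∧ x p ≤ M) (_ : ∀ p q, p ≤ q → x p ≤ x q)
    (_ : x ∈ FF S), ∃ c : A → ℝ, (∀ p, 0 ≤ c p) ∧ ∑ p ∈ S, c p ≤ M ∧ ∑ p ∈ S, c p • uu p = x := by
  classical
  induction n with
  | zero =>
    intro S hc _ M hM x _ _ hF
    have : S = ∅ := Finset.card_eq_zero.1 hc
    subst this
    refine ⟨0, fun _ => le_rfl, by simpa using hM, ?_⟩
    ext q
    simp [hF.1 q]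
  | succ n ih =>
    intro S hc hS M hM x hb hmono hF
    have hne : S.Nonempty := by rw [← Finset.card_pos]; omega
    obtain ⟨p0, hp0, hmin⟩ := S.exists_minimal hne
    have hleast : ∀ p ∈ S, p0 ≤ p := by
      intro p hp
      rcases hS.total hp0 hp with h | h
      · exact h
      · exact hmin hp h
    have hzero : ∀ q, ¬ p0 ≤ q → x q = 0 := fun q hq =>
      hF.1 q fun p hp hpq => hq ((hleast p hp).trans hpq)
    have v1 : ∀ q, p0 ≤ q → (x - x p0 • uu p0) q = x q - x p0 := fun q hq => by
      simp [uu_le hq]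
    have v0 : ∀ q, ¬ p0 ≤ q → (x - x p0 • uu p0) q = 0 := fun q hq => by
      simp [uu_not hq, hzero q hq]
    have hnn : ∀ q, 0 ≤ (x - x p0 • uu p0) q := by
      intro q
      by_cases h : p0 ≤ q
      · rw [v1 q h]; linarith [hmono _ _ h]
      · rw [v0 q h]
    have s1 : ∀ q, 0 ≤ (x - x p0 • uu p0) q ∧ (x - x p0 • uu p0) q ≤ M - x p0 := by
      intro q
      refine ⟨hnn q, ?_⟩
      by_cases h : p0 ≤ q
      · rw [v1 q h]; linarith [(hb q).2]
      · rw [v0 q h]; linarith [(hb p0).2]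
    have s2 : ∀ q r, q ≤ r → (x - x p0 • uu p0) q ≤ (x - x p0 • uu p0) r := by
      intro q r hqr
      by_cases h : p0 ≤ q
      · rw [v1 q h, v1 r (h.trans hqr)]; linarith [hmono _ _ hqr]
      · rw [v0 q h]; exact hnn r
    have s3 : x - x p0 • uu p0 ∈ FF (S.erase p0) := by
      constructor
      · intro q hq
        by_cases h : p0 ≤ q
        · rw [v1 q h, hF.2 p0 hp0 q h, sub_self]
          intro r hr hrq
          by_contra hne
          exact hq r (Finset.mem_erase.2 ⟨fun e => hne e.le, hr⟩) hrq
        · exact v0 q h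
      · intro p hp q hpq hmax
        have hpS := Finset.mem_of_mem_erase hp
        have h1 := hleast p hpS
        rw [v1 p h1, v1 q (h1.trans hpq), hF.2 p hpS q hpq]
        intro r hr hrq
        by_cases hr0 : r = p0
        · rw [hr0]; exact h1
        · exact hmax r (Finset.mem_erase.2 ⟨hr0, hr⟩) hrq
    obtain ⟨c, hc0, hc1, hc2⟩ := ih (S.erase p0) (by rw [Finset.card_erase_of_mem hp0]; omega)
      (hS.mono (by simp)) (M - x p0) (by linarith [(hb p0).2]) (x - x p0 • uu p0) s1 s2 s3
    refine ⟨fun p => if p = p0 then x p0 else c p, ?_, ?_, ?_⟩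
    · intro p
      dsimp only
      split_ifs
      · exact (hb p0).1
      · exact hc0 p
    · rw [← Finset.add_sum_erase _ _ hp0]
      rw [Finset.sum_congr rfl (g := c)]
      · simp only [if_true]; linarith
      · intro p hp; simp [Finset.ne_of_mem_erase hp]
    · rw [← Finset.add_sum_erase _ _ hp0]
      rw [Finset.sum_congr rfl (g := fun p => c p • uu p)]
      · simp only [if_true]; rw [hc2]; abel
      · intro p hp; simp [Finset.ne_of_mem_erase hp]

theorem FF_sum (S : Finset A) (c : A → ℝ) : ∑ p ∈ S, c p • uu p ∈ FF S := by
  constructor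
  · intro q hq
    simp only [Finset.sum_apply, Pi.smul_apply, smul_eq_mul]
    exact Finset.sum_eq_zero fun p hp => by rw [uu_not (hq p hp), mul_zero]
  · intro p hp q hpq hmax
    simp only [Finset.sum_apply, Pi.smul_apply, smul_eq_mul]
    refine Finset.sum_congr rfl fun r hr => ?_
    by_cases h : r ≤ q
    · rw [uu_le h, uu_le (hmax r hr h)]
    · rw [uu_not h, uu_not fun h' => h (h'.trans hpq)]

theorem FF_extreme (S : Finset A) : IsExtreme ℝ (orderPolytope A) (orderPolytope A ∩ FF S) := by
  refine ⟨inter_subset_left, ?_⟩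
  rintro x hx y hy z hz ⟨a, b, ha, hb, hab, he⟩
  have he : ∀ p, a * x p + b * y p = z p := fun p => congrFun he p
  refine ⟨hx, ?_, ?_⟩
  · intro q hq
    have h1 := hz.2.1 q hq
    rw [← he] at h1
    have : a * x q = 0 := by
      nlinarith [mul_nonneg ha.le (hx.1 q).1, mul_nonneg hb.le (hy.1 q).1]
    simpa [ha.ne'] using this
  · intro p hp q hpq hmax
    have h1 := hz.2.2 p hp q hpq hmax
    rw [← he, ← he] at h1
    have : a * (x q - x p) = 0 := by
      nlinarith [mul_nonneg ha.le (sub_nonneg.2 (hx.2 p q hpq)),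
        mul_nonneg hb.le (sub_nonneg.2 (hy.2 p q hpq))]
    have : x q - x p = 0 := by simpa [ha.ne'] using this
    linarith

open Classical in
theorem NN_order {S : Finset A} (hS : IsChain (· ≤ ·) (S : Set A)) :
    S.image uu ∈ NN (orderPolytope A) S.card := by
  have hli : LinearIndependent ℝ ((↑) : ↥(S.image uu) → (A → ℝ)) := by
    rw [linInd_iff]
    intro u hu i hi
    rw [Finset.sum_image uu_inj.injOn] at hu
    obtain ⟨p, hp, rfl⟩ := Finset.mem_image.1 hi
    exact uu_indep S (fun p => u (uu p)) hu p hp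
  refine ⟨hli, ?_, Finset.card_image_of_injective _ uu_inj⟩
  have : convexHull ℝ (insert 0 ((S.image uu : Finset (A → ℝ)) : Set (A → ℝ))) =
      orderPolytope A ∩ FF S := by
    ext x
    rw [hull_ins (linInd_zero hli)]
    simp only [Finset.sum_image uu_inj.injOn]
    constructor
    · rintro ⟨c, hc0, hc1, rfl⟩
      have hc0 : ∀ p ∈ S, 0 ≤ c (uu p) := fun p hp => hc0 _ (Finset.mem_image_of_mem _ hp)
      refine ⟨⟨fun q => ⟨?_, ?_⟩, fun q r hqr => ?_⟩, FF_sum S fun p => c (uu p)⟩ <;>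
        simp only [Finset.sum_apply, Pi.smul_apply, smul_eq_mul]
      · exact Finset.sum_nonneg fun p hp => mul_nonneg (hc0 p hp) (uu_nonneg _ _)
      · exact (Finset.sum_le_sum fun p hp =>
          mul_le_of_le_one_right (hc0 p hp) (uu_le_one _ _)).trans hc1
      · exact Finset.sum_le_sum fun p hp => mul_le_mul_of_nonneg_left (uu_mono p hqr) (hc0 p hp)
    · rintro ⟨hx, hF⟩
      obtain ⟨c, h0, h1, h2⟩ := FF_decomp _ S rfl hS 1 zero_le_one x hx.1 hx.2 hF
      refine ⟨Function.extend uu c 0, ?_, ?_, ?_⟩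
      · intro i hi
        obtain ⟨p, hp, rfl⟩ := Finset.mem_image.1 hi
        rw [uu_inj.extend_apply]; exact h0 p
      · simpa only [uu_inj.extend_apply] using h1
      · simpa only [uu_inj.extend_apply] using h2
  rw [this]
  exact FF_extreme S

theorem NN_le (n : ℕ) : (NN (chainPolytope A) n).ncard ≤ (NN (orderPolytope A) n).ncard := by
  classical
  refine (NN_chain_le n).trans ?_
  refine Set.ncard_le_ncard_of_injOn (fun S : Finset A => S.image uu) ?_ ?_
    (NN_finite order_finite n)
  · rintro S ⟨h1, rfl⟩
    exact NN_order h1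
  · intro S _ S' _ h
    exact Finset.image_injective uu_inj h

end Origin

/-! ### Final assembly -/

noncomputable def cnt (P : Set E) (n : ℕ) : ℕ := {T | T ∈ Simp P ∧ T.card = n}.ncard

theorem simpCount_nat {V : Type*} [NormedAddCommGroup V] [NormedSpace ℝ V] [FiniteDimensional ℝ V]
    (P : Set V) (n : ℕ) : simpCount P ((n : ℤ) - 1) = cnt P n := by
  rw [simpCount_eq]
  simp [cnt]

theorem simpCount_ineq {V : Type*} [NormedAddCommGroup V] [NormedSpace ℝ V]
    [FiniteDimensional ℝ V] {P Q : Set V} :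
    (∀ k : ℤ, simpCount P k ≤ simpCount Q k) ↔ ∀ n : ℕ, cnt P n ≤ cnt Q n := by
  constructor
  · intro h n
    have := h ((n : ℤ) - 1)
    rwa [simpCount_nat, simpCount_nat] at this
  · intro h k
    by_cases hk : -1 ≤ k
    · obtain ⟨n, hn⟩ := Int.eq_ofNat_of_zero_le (show 0 ≤ k + 1 by omega)
      have : k = (n : ℤ) - 1 := by omega
      rw [this, simpCount_nat, simpCount_nat]
      exact h n
    · rw [simpCount_eq]
      have : {T | T ∈ Simp P ∧ (T.card : ℤ) = k + 1} = ∅ := by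
        ext T
        simp only [mem_ofPred_eq, mem_empty_iff_false, iff_false, not_and]
        intro _
        omega
      rw [this]
      simp

section Algebra

theorem coeff_mul_nonneg {f g : PowerSeries ℤ} (hf : ∀ n, 0 ≤ PowerSeries.coeff n f)
    (hg : ∀ n, 0 ≤ PowerSeries.coeff n g) (n : ℕ) : 0 ≤ PowerSeries.coeff n (f * g) := by
  rw [PowerSeries.coeff_mul]
  exact Finset.sum_nonneg fun p _ => mul_nonneg (hf _) (hg _)

/-- Cauchy product of two sequences. -/
def cauchy (a b : ℕ → ℕ) (n : ℕ) : ℕ :=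
  ∑ ij ∈ Finset.HasAntidiagonal.antidiagonal n, a ij.1 * b ij.2

def gen (a : ℕ → ℕ) : PowerSeries ℤ := PowerSeries.mk fun n => (a n : ℤ)

theorem coeff_gen (a : ℕ → ℕ) (n : ℕ) : PowerSeries.coeff n (gen a) = a n := by simp [gen]

theorem coeff_cauchy (a b : ℕ → ℕ) (n : ℕ) :
    PowerSeries.coeff n (gen a * gen b) = cauchy a b n := by
  rw [PowerSeries.coeff_mul]
  simp [cauchy, coeff_gen]

theorem algebra_key (α β γ δ α' β' γ' δ' : ℕ → ℕ)
    (h1 : ∀ n, α n ≤ β n) (h2 : ∀ n, β n ≤ γ n) (h3 : γ 0 ≤ δ 0)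
    (h4 : ∀ n, γ (n + 1) + β n ≤ δ (n + 1) + α n)
    (h1' : ∀ n, α' n ≤ β' n) (h2' : ∀ n, β' n ≤ γ' n) (h3' : γ' 0 ≤ δ' 0)
    (h4' : ∀ n, γ' (n + 1) + β' n ≤ δ' (n + 1) + α' n) :
    cauchy γ γ' 0 ≤ cauchy δ δ' 0 ∧
    ∀ n, cauchy γ γ' (n + 1) + cauchy β β' n ≤ cauchy δ δ' (n + 1) + cauchy α α' n := by
  have h5 : ∀ n, γ n ≤ δ n := by
    rintro (_ | n)
    · exact h3
    · have := h4 n; have := h1 n; omega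
  have h5' : ∀ n, γ' n ≤ δ' n := by
    rintro (_ | n)
    · exact h3'
    · have := h4' n; have := h1' n; omega
  have base : ∀ a : ℕ → ℕ, ∀ n, 0 ≤ PowerSeries.coeff n (gen a) := fun a n => by
    rw [coeff_gen]; positivity
  have sub : ∀ a b : ℕ → ℕ, (∀ n, a n ≤ b n) → ∀ n, 0 ≤ PowerSeries.coeff n (gen b - gen a) :=
    fun a b h n => by
      rw [map_sub, coeff_gen, coeff_gen]
      have := h n
      omega
  have big : ∀ a b c d : ℕ → ℕ, (∀ n, a n ≤ b n) → c 0 ≤ d 0 →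
      (∀ n, c (n + 1) + b n ≤ d (n + 1) + a n) →
      ∀ n, 0 ≤ PowerSeries.coeff n ((gen d - gen c) - PowerSeries.X * (gen b - gen a)) := by
    intro a b c d _ h0 h n
    rcases n with _ | n
    · simp only [map_sub, PowerSeries.coeff_zero_X_mul, coeff_gen]
      omega
    · simp only [map_sub, PowerSeries.coeff_succ_X_mul, coeff_gen]
      have := h n
      omega
  have key : ∀ n, 0 ≤ PowerSeries.coeff n
      ((gen δ * gen δ' - gen γ * gen γ') - PowerSeries.X * (gen β * gen β' - gen α * gen α')) := by
    intro n
    have e : (gen δ * gen δ' - gen γ * gen γ') -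
          PowerSeries.X * (gen β * gen β' - gen α * gen α') =
        ((gen δ - gen γ) - PowerSeries.X * (gen β - gen α)) * gen β' +
        gen α * ((gen δ' - gen γ') - PowerSeries.X * (gen β' - gen α')) +
        (gen δ - gen γ) * (gen γ' - gen β') + (gen δ - gen α) * (gen δ' - gen γ') := by ring
    rw [e, map_add, map_add, map_add]
    have t1 := coeff_mul_nonneg (big α β γ δ h1 h3 h4) (base β') n
    have t2 := coeff_mul_nonneg (base α) (big α' β' γ' δ' h1' h3' h4') n
    have t3 := coeff_mul_nonneg (sub γ δ h5) (sub β' γ' h2') n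
    have t4 := coeff_mul_nonneg (sub α δ fun n => (h1 n).trans ((h2 n).trans (h5 n)))
      (sub γ' δ' h5') n
    omega
  constructor
  · have := key 0
    simp only [map_sub, PowerSeries.coeff_zero_X_mul, coeff_cauchy] at this
    omega
  · intro n
    have := key (n + 1)
    simp only [map_sub, PowerSeries.coeff_succ_X_mul, coeff_cauchy] at this
    omega

end Algebra

section Final

set_option linter.unusedSectionVars false

variable {A B : Type*} [Fintype A] [PartialOrder A] [Fintype B] [PartialOrder B]

theorem join_zero {P : Set (A → ℝ)} {Q : Set (B → ℝ)} (h0 : 0 ∈ P) (h0' : 0 ∈ Q)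
    (hP : ∀ x ∈ P, ∀ p, 0 ≤ x p) (hQ : ∀ x ∈ Q, ∀ p, 0 ≤ x p) :
    (0 : (A → ℝ) × (B → ℝ)) ∈ (Join P Q).extremePoints ℝ := by
  have nn : ∀ z ∈ Join P Q, (∀ p, 0 ≤ z.1 p) ∧ ∀ p, 0 ≤ z.2 p := by
    rintro z ⟨s, t, hs, ht, _, ⟨p, hp, e1⟩, ⟨q, hq, e2⟩⟩
    rw [← e1, ← e2]
    exact ⟨fun a => mul_nonneg hs (hP p hp a), fun b => mul_nonneg ht (hQ q hq b)⟩
  have z1 := zero_extreme_of_nonneg (P := {x : A → ℝ | ∀ p, 0 ≤ x p}) (fun _ => le_rfl)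
    (fun x hx => hx)
  have z2 := zero_extreme_of_nonneg (P := {x : B → ℝ | ∀ p, 0 ≤ x p}) (fun _ => le_rfl)
    (fun x hx => hx)
  refine ⟨⟨1, 0, zero_le_one, le_rfl, by norm_num, ⟨0, h0, by simp⟩, ⟨0, h0', by simp⟩⟩, ?_⟩
  rintro x hx y hy ⟨a, b, ha, hb, hab, he⟩
  have e1 := z1.2 (nn x hx).1 (nn y hy).1 ⟨a, b, ha, hb, hab, congrArg Prod.fst he⟩
  have e2 := z2.2 (nn x hx).2 (nn y hy).2 ⟨a, b, ha, hb, hab, congrArg Prod.snd he⟩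
  exact Prod.ext e1 e2

theorem cnt_flip_order (n : ℕ) : cnt (orderPolytope Bᵒᵈ) n = cnt (orderPolytope B) n :=
  (Simp_transport (flip1 B) order_flip order_finite n).symm

theorem cnt_flip_chain (n : ℕ) : cnt (chainPolytope Bᵒᵈ) n = cnt (chainPolytope B) n := by
  change cnt (E := B → ℝ) (chainPolytope Bᵒᵈ : Set (B → ℝ)) n = _
  rw [chain_flip]

theorem cnt_poly {P : Set E} (hP : (0 : E) ∈ P.extremePoints ℝ) (hf : (P.extremePoints ℝ).Finite) :
    cnt P 0 = (MM P 0).ncard ∧ ∀ n, cnt P (n + 1) = (MM P (n + 1)).ncard + (NN P n).ncard :=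
  ⟨Simp_count_zero, Simp_count_succ hP hf⟩

theorem cnt_join_ineq (hA : ∀ n, cnt (orderPolytope A) n ≤ cnt (chainPolytope A) n)
    (hB : ∀ n, cnt (orderPolytope B) n ≤ cnt (chainPolytope B) n)
    (fO : ((Join (orderPolytope A) (orderPolytope B)).extremePoints ℝ).Finite)
    (fC : ((Join (chainPolytope A) (chainPolytope B)).extremePoints ℝ).Finite) (n : ℕ) :
    cnt (Join (orderPolytope A) (orderPolytope B)) n ≤
      cnt (Join (chainPolytope A) (chainPolytope B)) n := by
  have cOA := cnt_poly (order_zero (A := A)) order_finite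
  have cOB := cnt_poly (order_zero (A := B)) order_finite
  have cCA := cnt_poly (chain_zero (A := A)) chain_finite
  have cCB := cnt_poly (chain_zero (A := B)) chain_finite
  have cO := cnt_poly (join_zero (order_zero (A := A)).1 (order_zero (A := B)).1
    (fun x hx p => (hx.1 p).1) (fun x hx p => (hx.1 p).1)) fO
  have cC := cnt_poly (join_zero (chain_zero (A := A)).1 (chain_zero (A := B)).1
    (fun x hx p => (hx.1 p)) (fun x hx p => (hx.1 p))) fC
  have mO : ∀ n, (MM (Join (orderPolytope A) (orderPolytope B)) n).ncard =
      cauchy (fun n => (MM (orderPolytope A) n).ncard) (fun n => (MM (orderPolytope B) n).ncard) n :=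
    MM_join order_convex order_convex order_zero order_zero order_finite order_finite
  have nO : ∀ n, (NN (Join (orderPolytope A) (orderPolytope B)) n).ncard =
      cauchy (fun n => (NN (orderPolytope A) n).ncard) (fun n => (NN (orderPolytope B) n).ncard) n :=
    NN_join order_convex order_convex order_zero order_zero order_finite order_finite
  have mC : ∀ n, (MM (Join (chainPolytope A) (chainPolytope B)) n).ncard =
      cauchy (fun n => (MM (chainPolytope A) n).ncard) (fun n => (MM (chainPolytope B) n).ncard) n :=
    MM_join chain_convex chain_convex chain_zero chain_zero chain_finite chain_finite
  have nC : ∀ n, (NN (Join (chainPolytope A) (chainPolytope B)) n).ncard =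
      cauchy (fun n => (NN (chainPolytope A) n).ncard) (fun n => (NN (chainPolytope B) n).ncard) n :=
    NN_join chain_convex chain_convex chain_zero chain_zero chain_finite chain_finite
  have key := algebra_key
    (fun n => (NN (chainPolytope A) n).ncard) (fun n => (NN (orderPolytope A) n).ncard)
    (fun n => (MM (orderPolytope A) n).ncard) (fun n => (MM (chainPolytope A) n).ncard)
    (fun n => (NN (chainPolytope B) n).ncard) (fun n => (NN (orderPolytope B) n).ncard)
    (fun n => (MM (orderPolytope B) n).ncard) (fun n => (MM (chainPolytope B) n).ncard)
    NN_le (fun n => Set.ncard_le_ncard NN_sub_MM (MM_finite order_finite n))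
    (by have := hA 0; rwa [cOA.1, cCA.1] at this)
    (fun n => by have := hA (n + 1); rwa [cOA.2, cCA.2] at this)
    NN_le (fun n => Set.ncard_le_ncard NN_sub_MM (MM_finite order_finite n))
    (by have := hB 0; rwa [cOB.1, cCB.1] at this)
    (fun n => by have := hB (n + 1); rwa [cOB.2, cCB.2] at this)
  rcases n with _ | n
  · rw [cO.1, cC.1, mO, mC]
    exact key.1
  · rw [cO.2, cC.2, mO, mC, nO, nC]
    exact key.2 n

end Final

/-- the simplex-count inequality between order and chain polytopes is
preserved by ordinal sums of posets (here the lexicographic sum `A ⊕ₗ B`). -/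
theorem ordinal_sum_simpCount_ineq (A B : Type*) [Fintype A] [PartialOrder A]
    [Fintype B] [PartialOrder B]
    (hA : ∀ k : ℤ, simpCount (orderPolytope A) k ≤ simpCount (chainPolytope A) k)
    (hB : ∀ k : ℤ, simpCount (orderPolytope B) k ≤ simpCount (chainPolytope B) k) :
    ∀ k : ℤ, simpCount (orderPolytope (A ⊕ₗ B)) k ≤ simpCount (chainPolytope (A ⊕ₗ B)) k := by
  have : Fintype (A ⊕ₗ B) := Fintype.ofEquiv (A ⊕ B) toLex
  rw [simpCount_ineq] at hA hB ⊢
  intro n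
  have hO : cnt (orderPolytope (A ⊕ₗ B)) n = cnt (Join (orderPolytope A) (orderPolytope Bᵒᵈ)) n :=
    Simp_transport (splitO A B) order_join order_finite n
  have hC : cnt (chainPolytope (A ⊕ₗ B)) n = cnt (Join (chainPolytope A) (chainPolytope Bᵒᵈ)) n :=
    Simp_transport (splitL A B).toAffineEquiv chain_join chain_finite n
  rw [hO, hC]
  have fO := extremePoints_finite_image (splitO A B) (order_finite (A := A ⊕ₗ B))
  have fC := extremePoints_finite_image (splitL A B).toAffineEquiv (chain_finite (A := A ⊕ₗ B))
  rw [order_join] at fO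
  rw [chain_join] at fC
  refine cnt_join_ineq hA (fun m => ?_) fO fC n
  rw [cnt_flip_order, cnt_flip_chain]
  exact hB m
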